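/- Let N ≥ 2, 1 < p ≤ N and p − 1 < q < q_c, and let Ω ⊆ ℝ^N be an open set containing the closed unit ball. Let u be a strong solution of (E) on Ω ∖ {0} with u ≥ 0 on Ω ∖ {0}, and assume liminf_{x→0} u(x)/μ_p(x) < ∞. Then there exists k ≥ 0 such that lim_{x→0} u(x)/μ_p(x) = k. -/

import Mathlib

open Metric Set Filter Topology MeasureTheory

/-- The vector field `x ↦ |∇u(x)|^{p-2} ∇u(x)`. -/
noncomputable def pGradField {N : ℕ} (p : ℝ) (u : EuclideanSpace ℝ (Fin N) → ℝ)
    (x : EuclideanSpace ℝ (Fin N)) : EuclideanSpace ℝ (Fin N) :=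
  ‖gradient u x‖ ^ (p - 2) • gradient u x

/-- A strong solution of `(E) : -Δ_p u + |∇u|^q = 0` on an open set `G ⊆ ℝ^N`. -/
def IsStrongSolution {N : ℕ} (p q : ℝ) (G : Set (EuclideanSpace ℝ (Fin N)))
    (u : EuclideanSpace ℝ (Fin N) → ℝ) : Prop :=
  ContDiffOn ℝ 1 u G ∧
  ContDiffOn ℝ 3 u {x | x ∈ G ∧ gradient u x ≠ 0} ∧
  ∀ x ∈ G, DifferentiableAt ℝ (pGradField p u) x ∧
    LinearMap.trace ℝ (EuclideanSpace ℝ (Fin N))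
      (fderiv ℝ (pGradField p u) x : EuclideanSpace ℝ (Fin N) →ₗ[ℝ] EuclideanSpace ℝ (Fin N))
      = ‖gradient u x‖ ^ q

/-- The fundamental solution of the p-Laplacian in `ℝ^N`. -/
noncomputable def mup (N : ℕ) (p : ℝ) (x : EuclideanSpace ℝ (Fin N)) : ℝ :=
  if p < N then ((p - 1) / ((N : ℝ) - p)) * ‖x‖ ^ ((p - (N : ℝ)) / (p - 1))
  else -Real.log ‖x‖

/-!
Bernstein's method applied to a positive solution gives `|∇u| ≤ C u / |x|` near the singularity,
hence Harnack's inequality on small spheres. So the finite liminf makes `u ≤ c μ_p` on arbitrarily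
small spheres for some `c`; let `k` be the infimum of such `c`. A solution is `p`-subharmonic, and
comparison with `c μ_p + A` on annuli turns this into `u ≤ (k + o(1)) μ_p` near `0`.

The blow-ups `y ↦ u(|x| y) / μ_p(x)` are locally bounded and equicontinuous, again by Harnack.
Their limits as `x → 0` are `p`-subharmonic functions below `k |y| ^ ((p - N) / (p - 1))` which,
by minimality of `k`, touch it on the unit sphere. By the strong comparison principle they all
coincide with it, and evaluating the blow-ups at `y = x / |x|` gives `u / μ_p → k`.
-/

section HessianCalculus

variable {E : Type*} [NormedAddCommGroup E] [InnerProductSpace ℝ E] [CompleteSpace E]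

/-- `f` is differentiable near `x`, with gradient `g` and Hessian operator `B` at `x`: its gradient
map `∇f` satisfies `∇f x = g` and has derivative `B` at `x`. -/
def HasHessianAt (f : E → ℝ) (g : E) (B : E →L[ℝ] E) (x : E) : Prop :=
  ∃ G : E → E, (∀ᶠ y in 𝓝 x, HasGradientAt f (G y) y) ∧ G x = g ∧ HasFDerivAt G B x

theorem hasGradientAt_iff_hasFDerivAt_innerSL {f : E → ℝ} {g x : E} :
    HasGradientAt f g x ↔ HasFDerivAt f (innerSL ℝ g) x :=
  hasGradientAt_iff_hasFDerivAt

theorem hasGradientAt_of_hasFDerivAt {f : E → ℝ} {L : E →L[ℝ] ℝ} {g x : E}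
    (h : HasFDerivAt f L x) (hL : ∀ v, L v = inner ℝ g v) : HasGradientAt f g x :=
  hasGradientAt_iff_hasFDerivAt_innerSL.2 <| h.congr_fderiv <| by ext v; simp [hL]

namespace HasHessianAt

variable {f f₁ f₂ : E → ℝ} {g g₁ g₂ x : E} {B B₁ B₂ : E →L[ℝ] E}

theorem add (h₁ : HasHessianAt f₁ g₁ B₁ x) (h₂ : HasHessianAt f₂ g₂ B₂ x) :
    HasHessianAt (fun y => f₁ y + f₂ y) (g₁ + g₂) (B₁ + B₂) x := by
  obtain ⟨G₁, e₁, r₁, d₁⟩ := h₁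
  obtain ⟨G₂, e₂, r₂, d₂⟩ := h₂
  refine ⟨fun y => G₁ y + G₂ y, ?_, by simp [r₁, r₂], d₁.add d₂⟩
  filter_upwards [e₁, e₂] with y h₁ h₂
  rw [hasGradientAt_iff_hasFDerivAt_innerSL] at *
  rw [map_add]
  exact h₁.add h₂

theorem const_mul (c : ℝ) (h : HasHessianAt f g B x) :
    HasHessianAt (fun y => c * f y) (c • g) (c • B) x := by
  obtain ⟨G, e, r, d⟩ := h
  refine ⟨fun y => c • G y, ?_, by simp [r], d.const_smul c⟩
  filter_upwards [e] with y h
  refine hasGradientAt_of_hasFDerivAt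
    ((hasGradientAt_iff_hasFDerivAt_innerSL.1 h).const_mul c) fun v => ?_
  simp [inner_smul_left]

theorem sub (h₁ : HasHessianAt f₁ g₁ B₁ x) (h₂ : HasHessianAt f₂ g₂ B₂ x) :
    HasHessianAt (fun y => f₁ y - f₂ y) (g₁ - g₂) (B₁ - B₂) x := by
  simpa [sub_eq_add_neg] using h₁.add (h₂.const_mul (-1))

theorem comp_smul {s : ℝ} (h : HasHessianAt f g B (s • x)) :
    HasHessianAt (fun y => f (s • y)) (s • g) ((s ^ 2) • B) x := by
  obtain ⟨G, e, r, d⟩ := h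
  have hs : ∀ y : E, HasFDerivAt (fun y : E => s • y) (s • ContinuousLinearMap.id ℝ E) y :=
    fun y => (hasFDerivAt_id y).const_smul s
  refine ⟨fun y => s • G (s • y), ?_, by simp [r], ?_⟩
  · filter_upwards [(hs x).continuousAt.tendsto.eventually e] with y hy
    rw [hasGradientAt_iff_hasFDerivAt_innerSL] at hy
    refine hasGradientAt_of_hasFDerivAt (HasFDerivAt.comp y hy (hs y)) fun v => ?_
    simp [inner_smul_left]
  · refine ((HasFDerivAt.comp x d (hs x)).const_smul s).congr_fderiv ?_
    ext v
    simp [pow_two, smul_smul]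

end HasHessianAt

theorem HasHessianAt.hasGradientAt {f : E → ℝ} {g x : E} {B : E →L[ℝ] E}
    (h : HasHessianAt f g B x) : HasGradientAt f g x := by
  obtain ⟨G, hG, rfl, -⟩ := h
  exact hG.self_of_nhds

theorem HasHessianAt.real_comp {f : E → ℝ} {g x : E} {B : E →L[ℝ] E} {F F' : ℝ → ℝ} {F'' : ℝ}
    (h : HasHessianAt f g B x) (hF : ∀ᶠ t in 𝓝 (f x), HasDerivAt F (F' t) t)
    (hF' : HasDerivAt F' F'' (f x)) :
    HasHessianAt (fun y => F (f y)) (F' (f x) • g)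
      (F' (f x) • B + F'' • InnerProductSpace.rankOne ℝ g g) x := by
  have hcont : Tendsto f (𝓝 x) (𝓝 (f x)) := h.hasGradientAt.continuousAt
  obtain ⟨G, hG, rfl, hB⟩ := h
  refine ⟨fun y => F' (f y) • G y, ?_, rfl, ?_⟩
  · filter_upwards [hG, hcont.eventually hF] with y hfy hFy
    rw [hasGradientAt_iff_hasFDerivAt_innerSL] at hfy
    refine hasGradientAt_of_hasFDerivAt (hFy.comp_hasFDerivAt y hfy) fun v => ?_
    simp [inner_smul_left]
  · have hf := hasGradientAt_iff_hasFDerivAt_innerSL.1 hG.self_of_nhds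
    refine ((hF'.comp_hasFDerivAt x hf).smul hB).congr_fderiv ?_
    ext v
    simp [smul_smul]

theorem hasHessianAt_norm_sub_sq (c x : E) :
    HasHessianAt (fun y => ‖y - c‖ ^ 2) ((2 : ℝ) • (x - c))
      ((2 : ℝ) • ContinuousLinearMap.id ℝ E) x := by
  refine ⟨fun y => (2 : ℝ) • (y - c), .of_forall fun y => ?_, rfl,
    ((hasFDerivAt_id x).sub_const c).const_smul 2⟩
  refine hasGradientAt_of_hasFDerivAt ((hasFDerivAt_id y).sub_const c).norm_sq fun v => ?_
  simp [inner_smul_left, inner_sub_left]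

theorem hasHessianAt_comp_norm_sub_sq {F F' : ℝ → ℝ} {F'' : ℝ} {c x : E}
    (hF : ∀ᶠ t in 𝓝 (‖x - c‖ ^ 2), HasDerivAt F (F' t) t)
    (hF' : HasDerivAt F' F'' (‖x - c‖ ^ 2)) :
    HasHessianAt (fun y => F (‖y - c‖ ^ 2)) ((2 * F' (‖x - c‖ ^ 2)) • (x - c))
      ((2 * F' (‖x - c‖ ^ 2)) • ContinuousLinearMap.id ℝ E +
        (4 * F'') • InnerProductSpace.rankOne ℝ (x - c) (x - c)) x := by
  convert (hasHessianAt_norm_sub_sq c x).real_comp hF hF' using 1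
  · module
  · ext v
    simp only [add_apply, smul_apply, InnerProductSpace.rankOne_apply, inner_smul_left,
      Real.ringHom_apply]
    module

theorem deriv_deriv_nonpos_of_isLocalMax {f : ℝ → ℝ} {t : ℝ} (hf : ContinuousAt f t)
    (h : IsLocalMax f t) : deriv (deriv f) t ≤ 0 := by
  by_contra! hpos
  have hmin : IsLocalMin f t := isLocalMin_of_deriv_deriv_pos hpos h.deriv_eq_zero hf
  have hconst : f =ᶠ[𝓝 t] fun _ => f t := by
    filter_upwards [h, hmin] with s h₁ h₂ using le_antisymm h₁ h₂
  have hderiv : deriv f =ᶠ[𝓝 t] fun _ => 0 := hconst.deriv.trans (by simp)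
  simp [hderiv.deriv_eq] at hpos

theorem HasHessianAt.eq_zero_of_isLocalMax {f : E → ℝ} {g x : E} {B : E →L[ℝ] E}
    (h : HasHessianAt f g B x) (hmax : IsLocalMax f x) : g = 0 := by
  obtain ⟨G, hG, rfl, -⟩ := h
  have hzero := hmax.hasFDerivAt_eq_zero
    (hasGradientAt_iff_hasFDerivAt_innerSL.1 hG.self_of_nhds)
  exact inner_self_eq_zero.1 (congrArg (fun L : E →L[ℝ] ℝ => L (G x)) hzero)

theorem HasHessianAt.inner_nonpos_of_isLocalMax {f : E → ℝ} {g x : E} {B : E →L[ℝ] E}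
    (h : HasHessianAt f g B x) (hmax : IsLocalMax f x) (v : E) : inner ℝ v (B v) ≤ 0 := by
  obtain ⟨G, hG, -, hB⟩ := h
  have hline : ∀ t : ℝ, HasDerivAt (fun t : ℝ => x + t • v) v t := fun t => by
    simpa using ((hasDerivAt_id t).smul_const v).const_add x
  have htend : Tendsto (fun t : ℝ => x + t • v) (𝓝 0) (𝓝 x) := by
    simpa using (hline 0).continuousAt.tendsto
  have hfirst : ∀ᶠ t in 𝓝 (0 : ℝ),
      HasDerivAt (fun t => f (x + t • v)) (inner ℝ v (G (x + t • v))) t := by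
    filter_upwards [htend.eventually hG] with t ht
    rw [hasGradientAt_iff_hasFDerivAt_innerSL] at ht
    refine (ht.comp_hasDerivAt t (hline t)).congr_deriv ?_
    simp [real_inner_comm]
  have hsecond : HasDerivAt (fun t : ℝ => inner ℝ v (G (x + t • v))) (inner ℝ v (B v)) 0 := by
    have hB' : HasFDerivAt G B (x + (0 : ℝ) • v) := by simpa using hB
    exact (innerSL ℝ v).hasFDerivAt.comp_hasDerivAt (0 : ℝ) (hB'.comp_hasDerivAt 0 (hline 0))
  have hderiv : deriv (fun t : ℝ => f (x + t • v)) =ᶠ[𝓝 0] fun t => inner ℝ v (G (x + t • v)) := by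
    filter_upwards [hfirst] with t ht using ht.deriv
  rw [← hsecond.deriv, ← hderiv.deriv_eq]
  refine deriv_deriv_nonpos_of_isLocalMax hfirst.self_of_nhds.continuousAt ?_
  filter_upwards [htend.eventually hmax] with t ht
  simpa using ht

end HessianCalculus

section PForm

variable {E : Type*} [NormedAddCommGroup E] [InnerProductSpace ℝ E]

/-- The normalised `p`-Laplacian `|∇f|^{4-p} Δ_p f` of a function with gradient `g` and Hessian `B`
at a point. The factor `|∇f|^{4-p}` makes it polynomial in `g`, hence defined also for `g = 0`. -/
noncomputable def pForm (p : ℝ) (g : E) (B : E →L[ℝ] E) : ℝ :=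
  ‖g‖ ^ 2 * LinearMap.trace ℝ E (B : E →ₗ[ℝ] E) + (p - 2) * inner ℝ g (B g)

theorem pForm_add (p : ℝ) (g : E) (B C : E →L[ℝ] E) :
    pForm p g (B + C) = pForm p g B + pForm p g C := by
  simp only [pForm, ContinuousLinearMap.toLinearMap_add, map_add, add_apply, inner_add_right]
  ring

theorem pForm_sub (p : ℝ) (g : E) (B C : E →L[ℝ] E) :
    pForm p g (B - C) = pForm p g B - pForm p g C := by
  simp only [pForm, ContinuousLinearMap.toLinearMap_sub, map_sub, sub_apply, inner_sub_right]
  ring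

theorem pForm_smul (p c : ℝ) (g : E) (B : E →L[ℝ] E) :
    pForm p g (c • B) = c * pForm p g B := by
  simp only [pForm, ContinuousLinearMap.toLinearMap_smul, map_smul, smul_eq_mul, smul_apply,
    inner_smul_right]
  ring

theorem sq_real_inner_le_norm_sq_mul_norm_sq (g d : E) :
    inner ℝ g d ^ 2 ≤ ‖g‖ ^ 2 * ‖d‖ ^ 2 := by
  rw [← mul_pow, sq_le_sq, abs_mul, abs_norm, abs_norm]
  exact abs_real_inner_le_norm g d

theorem pForm_smul_left (p c : ℝ) (g : E) (B : E →L[ℝ] E) :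
    pForm p (c • g) B = c ^ 2 * pForm p g B := by
  simp only [pForm, norm_smul, Real.norm_eq_abs, mul_pow, sq_abs, map_smul, inner_smul_right,
    inner_smul_left, Real.ringHom_apply]
  ring

variable [FiniteDimensional ℝ E]

theorem pForm_id (p : ℝ) (g : E) :
    pForm p g (ContinuousLinearMap.id ℝ E) = (Module.finrank ℝ E + p - 2) * ‖g‖ ^ 2 := by
  have : LinearMap.trace ℝ E ((ContinuousLinearMap.id ℝ E : E →L[ℝ] E) : E →ₗ[ℝ] E)
      = Module.finrank ℝ E := by
    simp
  rw [pForm, this, ContinuousLinearMap.id_apply, real_inner_self_eq_norm_sq]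
  ring

theorem pForm_rankOne (p : ℝ) (g c : E) :
    pForm p g (InnerProductSpace.rankOne ℝ c c) =
      ‖g‖ ^ 2 * ‖c‖ ^ 2 + (p - 2) * inner ℝ g c ^ 2 := by
  rw [pForm, InnerProductSpace.trace_rankOne, InnerProductSpace.rankOne_apply, inner_smul_right,
    real_inner_self_eq_norm_sq, real_inner_comm g c]
  ring

theorem exists_orthonormalBasis_eq_norm_smul {n : ℕ} (hn : Module.finrank ℝ E = n + 1) {g : E}
    (hg : g ≠ 0) : ∃ b : OrthonormalBasis (Fin (n + 1)) ℝ E, g = ‖g‖ • b 0 := by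
  have hv : Orthonormal ℝ (({0} : Set (Fin (n + 1))).domRestrict fun _ => (‖g‖⁻¹ • g)) := by
    constructor
    · rintro ⟨i, hi⟩
      simp [norm_smul, hg]
    · rintro ⟨i, hi⟩ ⟨j, hj⟩ hij
      exact absurd (Subtype.ext ((Set.mem_singleton_iff.1 hi).trans
        (Set.mem_singleton_iff.1 hj).symm)) hij
  obtain ⟨b, hb⟩ := hv.exists_orthonormalBasis_extension_of_card_eq (by simp [hn])
  refine ⟨b, ?_⟩
  rw [hb 0 rfl, smul_smul, mul_inv_cancel₀ (norm_ne_zero_iff.2 hg), one_smul]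

theorem inner_apply_le_norm_sq_mul_trace {B : E →L[ℝ] E} (hB : ∀ v, 0 ≤ inner ℝ v (B v)) (g : E) :
    inner ℝ g (B g) ≤ ‖g‖ ^ 2 * LinearMap.trace ℝ E (B : E →ₗ[ℝ] E) := by
  rcases eq_or_ne g 0 with rfl | hg
  · simp
  obtain ⟨n, hn⟩ : ∃ n, Module.finrank ℝ E = n + 1 := by
    have : Nontrivial E := ⟨g, 0, hg⟩
    exact ⟨_, (Nat.succ_pred_eq_of_pos Module.finrank_pos).symm⟩
  obtain ⟨b, hb⟩ := exists_orthonormalBasis_eq_norm_smul hn hg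
  rw [LinearMap.trace_eq_sum_inner _ b]
  have hinner : inner ℝ g (B g) = ‖g‖ ^ 2 * inner ℝ (b 0) (B (b 0)) := by
    conv_lhs => rw [hb]
    simp only [map_smul, inner_smul_right, inner_smul_left, Real.ringHom_apply]
    ring
  rw [hinner]
  refine mul_le_mul_of_nonneg_left ?_ (by positivity)
  exact Finset.single_le_sum (f := fun i => inner ℝ (b i) (B (b i))) (fun i _ => hB (b i))
    (Finset.mem_univ 0)

theorem pForm_nonneg {p : ℝ} (hp : 1 ≤ p) {B : E →L[ℝ] E} (hB : ∀ v, 0 ≤ inner ℝ v (B v))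
    (g : E) : 0 ≤ pForm p g B := by
  have h1 := inner_apply_le_norm_sq_mul_trace hB g
  have h2 := hB g
  rw [pForm]
  nlinarith

theorem pForm_nonpos {p : ℝ} (hp : 1 ≤ p) {B : E →L[ℝ] E} (hB : ∀ v, inner ℝ v (B v) ≤ 0)
    (g : E) : pForm p g B ≤ 0 := by
  have := pForm_nonneg hp (B := (-1 : ℝ) • B) (fun v => by simpa using hB v) g
  rw [pForm_smul] at this
  linarith

end PForm

section Hessian

variable {E : Type*} [NormedAddCommGroup E] [InnerProductSpace ℝ E] [CompleteSpace E]
  {u : E → ℝ} {x : E}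

/-- The inverse Riesz isomorphism as a linear, rather than conjugate-linear, map. -/
noncomputable def toDualSymmL (E : Type*) [NormedAddCommGroup E] [InnerProductSpace ℝ E]
    [CompleteSpace E] : (E →L[ℝ] ℝ) →L[ℝ] E where
  toFun := (InnerProductSpace.toDual ℝ E).symm
  map_add' := map_add _
  map_smul' := by simp
  cont := (InnerProductSpace.toDual ℝ E).symm.continuous

theorem inner_toDualSymmL (f : E →L[ℝ] ℝ) (v : E) : inner ℝ (toDualSymmL E f) v = f v :=
  InnerProductSpace.toDual_symm_apply

/-- The Hessian operator of `u` at `x`: the derivative of the gradient map. -/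
noncomputable def hessian (u : E → ℝ) (x : E) : E →L[ℝ] E := fderiv ℝ (gradient u) x

theorem contDiffAt_gradient {n m : WithTop ℕ∞} (hu : ContDiffAt ℝ n u x) (hmn : m + 1 ≤ n) :
    ContDiffAt ℝ m (gradient u) x :=
  (toDualSymmL E).contDiff.contDiffAt.comp x (hu.fderiv_right hmn)

theorem hasFDerivAt_gradient (hu : ContDiffAt ℝ 2 u x) :
    HasFDerivAt (gradient u) (hessian u x) x :=
  ((contDiffAt_gradient (m := 1) hu (by norm_num)).differentiableAt (by norm_num)).hasFDerivAt

theorem continuousAt_gradient (hu : ContDiffAt ℝ 1 u x) : ContinuousAt (gradient u) x :=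
  (contDiffAt_gradient (m := 0) hu (by norm_num)).continuousAt

theorem continuousAt_hessian (hu : ContDiffAt ℝ 2 u x) : ContinuousAt (hessian u) x :=
  ((contDiffAt_gradient (m := 1) hu (by norm_num)).fderiv_right (m := 0) (by simp)).continuousAt

theorem hasFDerivAt_hessian (hu : ContDiffAt ℝ 3 u x) :
    HasFDerivAt (hessian u) (fderiv ℝ (hessian u) x) x :=
  (((contDiffAt_gradient (m := 2) hu (by norm_num)).fderiv_right (m := 1)
    (by norm_num)).differentiableAt (by norm_num)).hasFDerivAt

theorem hasHessianAt_hessian (hu : ContDiffAt ℝ 2 u x) :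
    HasHessianAt u (gradient u x) (hessian u x) x := by
  refine ⟨gradient u, ?_, rfl, hasFDerivAt_gradient hu⟩
  filter_upwards [hu.eventually (by simp)] with y hy
  exact (hy.differentiableAt (by norm_num)).hasGradientAt

theorem inner_hessian_apply (hu : ContDiffAt ℝ 2 u x) (v w : E) :
    inner ℝ (hessian u x v) w = fderiv ℝ (fderiv ℝ u) x v w := by
  have hdu : DifferentiableAt ℝ (fderiv ℝ u) x :=
    (hu.fderiv_right (m := 1) (by norm_num)).differentiableAt (by norm_num)
  have hgrad : HasFDerivAt (gradient u) ((toDualSymmL E).comp (fderiv ℝ (fderiv ℝ u) x)) x :=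
    (toDualSymmL E).hasFDerivAt.comp x hdu.hasFDerivAt
  rw [hessian, hgrad.fderiv, ContinuousLinearMap.comp_apply, inner_toDualSymmL]

theorem inner_hessian_comm (hu : ContDiffAt ℝ 2 u x) (v w : E) :
    inner ℝ (hessian u x v) w = inner ℝ v (hessian u x w) := by
  rw [inner_hessian_apply hu, real_inner_comm, inner_hessian_apply hu]
  exact (hu.isSymmSndFDerivAt (by simp)).eq v w

theorem fderiv_hessian_comm (hu : ContDiffAt ℝ 3 u x) (v w : E) :
    fderiv ℝ (hessian u) x v w = fderiv ℝ (hessian u) x w v :=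
  ((contDiffAt_gradient (m := 2) hu (by norm_num)).isSymmSndFDerivAt (by simp)).eq v w

theorem hasHessianAt_norm_gradient_sq (hu : ContDiffAt ℝ 3 u x) :
    HasHessianAt (fun y => ‖gradient u y‖ ^ 2) ((2 : ℝ) • hessian u x (gradient u x))
      ((2 : ℝ) • ((fderiv ℝ (hessian u) x).flip (gradient u x) +
        (hessian u x).comp (hessian u x))) x := by
  have hu₂ : ContDiffAt ℝ 2 u x := hu.of_le (by norm_num)
  refine ⟨fun y => (2 : ℝ) • hessian u y (gradient u y), ?_, rfl, ?_⟩
  · filter_upwards [hu₂.eventually (by simp)] with y hy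
    refine hasGradientAt_of_hasFDerivAt (hasFDerivAt_gradient hy).norm_sq fun v => ?_
    simp [inner_smul_left, inner_hessian_comm hy]
  · refine (((hasFDerivAt_hessian hu).clm_apply
      (hasFDerivAt_gradient hu₂)).const_smul (2 : ℝ)).congr_fderiv ?_
    ext v
    simp [add_comm]

theorem HasHessianAt.log {f : E → ℝ} {g x : E} {B : E →L[ℝ] E} (h : HasHessianAt f g B x)
    (hf : f x ≠ 0) :
    HasHessianAt (fun y => Real.log (f y)) ((f x)⁻¹ • g)
      ((f x)⁻¹ • B + (-(f x ^ 2)⁻¹) • InnerProductSpace.rankOne ℝ g g) x :=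
  h.real_comp ((eventually_ne_nhds hf).mono fun _ ht => Real.hasDerivAt_log ht)
    (hasDerivAt_inv hf)

end Hessian

section Scalar

/-- A coercivity constant of the form `(y - (p-1) γ)² / n + 2 a y γ` on the quadrant
`y, γ ≥ 0`. -/
noncomputable def coercivityConst (n p a : ℝ) : ℝ :=
  min 1 (a * n / (p - 1)) / n * min 1 ((p - 1) ^ 2)

theorem coercivityConst_pos {n p a : ℝ} (hn : 0 < n) (hp : 1 < p) (ha : 0 < a) :
    0 < coercivityConst n p a := by
  have : 0 < p - 1 := by linarith
  unfold coercivityConst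
  positivity

theorem coercivityConst_mul_le {n p a y γ : ℝ} (hn : 0 < n) (hp : 1 < p) (ha : 0 < a)
    (hy : 0 ≤ y) (hγ : 0 ≤ γ) :
    coercivityConst n p a * (y ^ 2 + γ ^ 2) ≤ 1 / n * (y - (p - 1) * γ) ^ 2 + 2 * a * y * γ := by
  have hp' : 0 < p - 1 := by linarith
  set t := min 1 (a * n / (p - 1))
  have : 0 < t := by positivity
  have ht₁ : t ≤ 1 := min_le_left _ _
  have ht₂ : t * (p - 1) ≤ a * n := (le_div_iff₀ hp').1 (min_le_right _ _)
  calc coercivityConst n p a * (y ^ 2 + γ ^ 2)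
      = t / n * (min 1 ((p - 1) ^ 2) * y ^ 2 + min 1 ((p - 1) ^ 2) * γ ^ 2) := by
        rw [coercivityConst]
        ring
    _ ≤ t / n * (1 * y ^ 2 + (p - 1) ^ 2 * γ ^ 2) := by
        gcongr
        · exact min_le_left _ _
        · exact min_le_right _ _
    _ ≤ 1 / n * (y - (p - 1) * γ) ^ 2 + 2 * a * y * γ := by
        rw [div_mul_eq_mul_div, one_div_mul_eq_div, div_add' _ _ _ hn.ne',
          div_le_div_iff_of_pos_right hn]
        nlinarith [mul_nonneg (sub_nonneg.2 ht₁) (sq_nonneg (y - (p - 1) * γ)),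
          mul_nonneg (sub_nonneg.2 ht₂) (mul_nonneg hy hγ)]

/-- The constant in the pointwise Bernstein estimate `norm_gradient_sq_div_sq_le`. -/
noncomputable def bernsteinConst (n p a : ℝ) : ℝ :=
  2 / coercivityConst n p a * (2 / n * (p - 2) ^ 2 + 8 * (p - 1) ^ 2 / coercivityConst n p a
    + (a + 1) ^ 2 / coercivityConst n p a + 2 * p + 1)

theorem bernsteinConst_pos {n p a : ℝ} (hn : 0 < n) (hp : 1 < p) (ha : 0 < a) :
    0 < bernsteinConst n p a := by
  have := coercivityConst_pos hn hp ha
  unfold bernsteinConst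
  positivity

theorem two_mul_mul_le_mul_sq_add_sq_div {c : ℝ} (hc : 0 < c) (x y : ℝ) :
    2 * x * y ≤ c * x ^ 2 + y ^ 2 / c := by
  have hsq : c * x ^ 2 + y ^ 2 / c - 2 * x * y = (c * x - y) ^ 2 / c := by
    field_simp
    ring
  have : 0 ≤ (c * x - y) ^ 2 / c := by positivity
  linarith

theorem sq_le_bernsteinConst_mul {n p a y γ θ e κ : ℝ} (hn : 0 < n) (hp : 1 < p) (ha : 0 < a)
    (hy : 0 ≤ y) (hγ : 0 ≤ γ) (hθ : θ ^ 2 ≤ e) (hκ : 0 ≤ κ)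
    (h : 2 / n * (y - (p - 1) * γ + (p - 2) * θ) ^ 2 + 4 * (p - 1) * γ * θ - 2 * p * e
      + 2 * a * y * γ - 2 * (a + 1) * y * θ ≤ κ) :
    γ ^ 2 ≤ bernsteinConst n p a * (e + κ) := by
  have hc := coercivityConst_pos hn hp ha
  have hcoercive := coercivityConst_mul_le hn hp ha hy hγ
  rw [bernsteinConst]
  set c := coercivityConst n p a
  have he : 0 ≤ e := (sq_nonneg θ).trans hθ
  have hsquare : 1 / n * (y - (p - 1) * γ) ^ 2 - 2 / n * (p - 2) ^ 2 * θ ^ 2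
      ≤ 2 / n * (y - (p - 1) * γ + (p - 2) * θ) ^ 2 := by
    have : 0 ≤ 1 / n * (y - (p - 1) * γ + 2 * ((p - 2) * θ)) ^ 2 := by positivity
    linear_combination this
  have hγθ : -(4 * (p - 1) * γ * θ) ≤ c / 2 * γ ^ 2 + 8 * (p - 1) ^ 2 / c * θ ^ 2 := by
    have := two_mul_mul_le_mul_sq_add_sq_div (half_pos hc) γ (-(2 * (p - 1) * θ))
    linear_combination this
  have hyθ : 2 * (a + 1) * y * θ ≤ c * y ^ 2 + (a + 1) ^ 2 / c * θ ^ 2 := by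
    have := two_mul_mul_le_mul_sq_add_sq_div hc y ((a + 1) * θ)
    linear_combination this
  set S := 2 / n * (p - 2) ^ 2 + 8 * (p - 1) ^ 2 / c + (a + 1) ^ 2 / c with hS
  have hS₀ : 0 ≤ S := by positivity
  have hSθ : S * θ ^ 2 ≤ S * e := mul_le_mul_of_nonneg_left hθ hS₀
  have hmain : c / 2 * γ ^ 2 ≤ (S + 2 * p + 1) * (e + κ) := by
    have hcross : 0 ≤ (S + 2 * p) * κ + e := by positivity
    linear_combination h + hcoercive + hsquare + hγθ + hyθ + hSθ + hcross + (θ ^ 2) * hS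
  calc γ ^ 2 = 2 / c * (c / 2 * γ ^ 2) := by field_simp
    _ ≤ 2 / c * ((S + 2 * p + 1) * (e + κ)) := mul_le_mul_of_nonneg_left hmain (by positivity)
    _ = 2 / c * (S + 2 * p + 1) * (e + κ) := by ring

-- In the application `m = |∇u|`, `γ = m / u`, `y = m ^ a`, `θ = ⟪∇u, l⟫ / (2 m)`, `e = |l|² / 4`,
-- and `δ`, `τ`, `ε`, `K` are `⟪∇u, D²u ∇u⟫`, `tr D²u`, `|D²u ∇u|²`, `tr (D²u)²`.
theorem bernstein_quadratic_le {n p a m U γ y θ e τ δ ε K X P κ : ℝ} (hm : 0 < m) (hγ : 0 < γ)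
    (hU : γ * U = m) (hτ : τ = m * (y - (p - 2) * (γ - θ))) (hδ : δ = m ^ 3 * (γ - θ))
    (hε : ε = m ^ 4 * (γ ^ 2 - 2 * γ * θ + e))
    (hX : 2 * δ * τ + X + 2 * (p - 2) * ε = (a + 3) * (y * m) * δ)
    (hmax : 2 / m ^ 2 * (X + (m ^ 2 * K + (p - 2) * ε))
      - 4 / (m ^ 2) ^ 2 * (m ^ 2 * ε + (p - 2) * δ ^ 2)
      - 2 / U * (m ^ 2 * (y * m)) + 2 / U ^ 2 * ((p - 1) * (m ^ 2) ^ 2) + P ≤ 0)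
    (hK : (τ - m ^ 2 / U) ^ 2 / n + 2 * δ / U - (m ^ 2) ^ 2 / U ^ 2 ≤ K)
    (hP : -(κ * m ^ 2) ≤ P) :
    2 / n * (y - (p - 1) * γ + (p - 2) * θ) ^ 2 + 4 * (p - 1) * γ * θ
      - 2 * p * e + 2 * a * y * γ - 2 * (a + 1) * y * θ ≤ κ := by
  obtain rfl : U = m / γ := eq_div_of_mul_eq hγ.ne' (by rw [mul_comm, hU])
  have hK' : m ^ 2 * (1 / n * (y - (p - 1) * γ + (p - 2) * θ) ^ 2 + 2 * γ * (γ - θ) - γ ^ 2)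
      ≤ K := by
    refine le_of_eq_of_le ?_ hK
    rw [hδ, hτ]
    field_simp
    ring
  have hmax' : 2 * K + m ^ 2 * (2 * (a + 1) * y * (γ - θ) - 2 * p * (γ ^ 2 - 2 * γ * θ + e)
      + 2 * (p - 1) * γ ^ 2 - 2 * y * γ) + P ≤ 0 := by
    refine le_of_eq_of_le ?_ hmax
    rw [show X = (a + 3) * (y * m) * δ - 2 * δ * τ - 2 * (p - 2) * ε by linarith, hδ, hε, hτ]
    field_simp
    ring
  refine le_of_mul_le_mul_left (a := m ^ 2) ?_ (by positivity)
  linear_combination hmax' + hP + 2 * hK'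

end Scalar

section Bernstein

theorem hasFDerivAt_norm_rpow_comp {E F : Type*} [NormedAddCommGroup E] [NormedSpace ℝ E]
    [NormedAddCommGroup F] [InnerProductSpace ℝ F] {G : E → F} {B : E →L[ℝ] F} {x : E}
    (h : HasFDerivAt G B x) (hg : G x ≠ 0) (s : ℝ) :
    HasFDerivAt (fun y => ‖G y‖ ^ s) ((s * ‖G x‖ ^ (s - 2)) • (innerSL ℝ (G x)).comp B) x := by
  have hpow : ∀ (y : E) (r : ℝ), (‖G y‖ ^ 2) ^ r = ‖G y‖ ^ (2 * r) := fun y r => by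
    rw [← Real.rpow_natCast, ← Real.rpow_mul (norm_nonneg _), Nat.cast_ofNat]
  have hsq := h.norm_sq.rpow_const (p := s / 2) (Or.inl (by simpa using hg))
  simp only [hpow] at hsq
  rw [mul_div_cancel₀ s two_ne_zero, show 2 * (s / 2 - 1) = s - 2 by ring] at hsq
  refine hsq.congr_fderiv ?_
  module

variable {E : Type*} [NormedAddCommGroup E] [InnerProductSpace ℝ E]

theorem pForm_flip (p : ℝ) {T : E →L[ℝ] E →L[ℝ] E} (hT : ∀ v w, T v w = T w v) (g : E) :
    pForm p g (T.flip g) = pForm p g (T g) := by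
  congr 1
  ext v
  simp [hT v g]

variable [FiniteDimensional ℝ E]

theorem hasDerivAt_pForm {p : ℝ} {G : ℝ → E} {D : ℝ → E →L[ℝ] E} {G' : E} {D' : E →L[ℝ] E}
    {t : ℝ} (hG : HasDerivAt G G' t) (hD : HasDerivAt D D' t) :
    HasDerivAt (fun s => pForm p (G s) (D s))
      (2 * inner ℝ (G t) G' * LinearMap.trace ℝ E (D t : E →ₗ[ℝ] E) + pForm p (G t) D' +
        (p - 2) * (inner ℝ (G t) (D t G') + inner ℝ G' (D t (G t)))) t := by
  let tr : (E →L[ℝ] E) →L[ℝ] ℝ := LinearMap.toContinuousLinearMap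
    ((LinearMap.trace ℝ E).comp (ContinuousLinearMap.coeLM ℝ))
  have htr : HasDerivAt (fun s => LinearMap.trace ℝ E (D s : E →ₗ[ℝ] E))
      (LinearMap.trace ℝ E (D' : E →ₗ[ℝ] E)) t := tr.hasFDerivAt.comp_hasDerivAt t hD
  refine ((hG.norm_sq.mul htr).add
    ((hG.inner ℝ (hD.clm_apply hG)).const_mul (p - 2))).congr_deriv ?_
  rw [pForm, inner_add_right]
  ring

theorem sq_trace_le_finrank_mul_trace_comp {A : E →L[ℝ] E}
    (hA : ∀ v w, inner ℝ (A v) w = inner ℝ v (A w)) :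
    LinearMap.trace ℝ E (A : E →ₗ[ℝ] E) ^ 2 ≤
      Module.finrank ℝ E * LinearMap.trace ℝ E ((A.comp A : E →L[ℝ] E) : E →ₗ[ℝ] E) := by
  let b := stdOrthonormalBasis ℝ E
  have hdiag : ∀ i, inner ℝ (b i) (A (b i)) ^ 2 ≤ inner ℝ (b i) (A (A (b i))) := fun i => by
    rw [← hA (b i) (A (b i)), real_inner_self_eq_norm_sq, sq_le_sq, abs_norm]
    simpa using abs_real_inner_le_norm (b i) (A (b i))
  rw [LinearMap.trace_eq_sum_inner _ b, LinearMap.trace_eq_sum_inner _ b]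
  calc (∑ i, inner ℝ (b i) (A (b i))) ^ 2
      ≤ Module.finrank ℝ E * ∑ i, inner ℝ (b i) (A (b i)) ^ 2 := by
        simpa using sq_sum_le_card_mul_sum_sq (s := Finset.univ)
          (f := fun i => inner ℝ (b i) (A (b i)))
    _ ≤ Module.finrank ℝ E * ∑ i, inner ℝ (b i) (A (A (b i))) := by
        gcongr with i
        exact hdiag i

theorem trace_sub_rankOne_comp_self (D : E →L[ℝ] E) (g : E) (c : ℝ) :
    LinearMap.trace ℝ E ((D - c • InnerProductSpace.rankOne ℝ g g).comp
      (D - c • InnerProductSpace.rankOne ℝ g g) : E →L[ℝ] E).toLinearMap =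
      LinearMap.trace ℝ E ((D.comp D : E →L[ℝ] E) : E →ₗ[ℝ] E) - 2 * c * inner ℝ g (D g)
        + c ^ 2 * (‖g‖ ^ 2) ^ 2 := by
  have hcomm : LinearMap.trace ℝ E
      (((InnerProductSpace.rankOne ℝ g g).comp D : E →L[ℝ] E) : E →ₗ[ℝ] E) =
      LinearMap.trace ℝ E
        ((D.comp (InnerProductSpace.rankOne ℝ g g) : E →L[ℝ] E) : E →ₗ[ℝ] E) :=
    LinearMap.trace_mul_comm ℝ _ _
  simp only [ContinuousLinearMap.sub_comp, ContinuousLinearMap.comp_sub,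
    ContinuousLinearMap.smul_comp, ContinuousLinearMap.comp_smul,
    ContinuousLinearMap.toLinearMap_sub, ContinuousLinearMap.toLinearMap_smul, map_sub, map_smul,
    hcomm, InnerProductSpace.comp_rankOne, InnerProductSpace.trace_rankOne, sub_apply, smul_apply,
    InnerProductSpace.rankOne_apply, real_inner_self_eq_norm_sq, smul_eq_mul]
  ring

-- The Cauchy-Schwarz inequality for the trace, applied to `D - U⁻¹ g ⊗ g` instead of `D`.
theorem sq_trace_sub_div_le {D : E →L[ℝ] E} (hD : ∀ v w, inner ℝ (D v) w = inner ℝ v (D w))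
    {g : E} (hg : g ≠ 0) (U : ℝ) :
    (LinearMap.trace ℝ E (D : E →ₗ[ℝ] E) - ‖g‖ ^ 2 / U) ^ 2 / Module.finrank ℝ E
      + 2 * inner ℝ g (D g) / U - (‖g‖ ^ 2) ^ 2 / U ^ 2
      ≤ LinearMap.trace ℝ E ((D.comp D : E →L[ℝ] E) : E →ₗ[ℝ] E) := by
  have hn : (0 : ℝ) < Module.finrank ℝ E := by
    have : Nontrivial E := ⟨g, 0, hg⟩
    exact_mod_cast Module.finrank_pos
  have hsym : ∀ v w, inner ℝ ((D - U⁻¹ • InnerProductSpace.rankOne ℝ g g) v) w =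
      inner ℝ v ((D - U⁻¹ • InnerProductSpace.rankOne ℝ g g) w) := fun v w => by
    simp only [sub_apply, smul_apply, InnerProductSpace.rankOne_apply, inner_sub_left,
      inner_sub_right, real_inner_smul_left, real_inner_smul_right, hD, real_inner_comm g v]
    ring
  have hcs := sq_trace_le_finrank_mul_trace_comp hsym
  rw [trace_sub_rankOne_comp_self, ContinuousLinearMap.toLinearMap_sub,
    ContinuousLinearMap.toLinearMap_smul, map_sub, map_smul, InnerProductSpace.trace_rankOne,
    real_inner_self_eq_norm_sq, smul_eq_mul, inv_mul_eq_div, ← div_le_iff₀' hn] at hcs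
  linear_combination hcs

theorem pForm_hessian_deriv {p s : ℝ} {u : E → ℝ} {x : E} (hu : ContDiffAt ℝ 3 u x)
    (heq : ∀ᶠ y in 𝓝 x, pForm p (gradient u y) (hessian u y) = ‖gradient u y‖ ^ s)
    (hg : gradient u x ≠ 0) :
    2 * inner ℝ (gradient u x) (hessian u x (gradient u x)) *
        LinearMap.trace ℝ E (hessian u x : E →ₗ[ℝ] E)
      + pForm p (gradient u x) (fderiv ℝ (hessian u) x (gradient u x))
      + 2 * (p - 2) * ‖hessian u x (gradient u x)‖ ^ 2
      = s * ‖gradient u x‖ ^ (s - 2) *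
        inner ℝ (gradient u x) (hessian u x (gradient u x)) := by
  have hu₂ : ContDiffAt ℝ 2 u x := hu.of_le (by norm_num)
  set g := gradient u x with hgdef
  have hline : HasDerivAt (fun t : ℝ => x + t • g) g 0 := by
    simpa using ((hasDerivAt_id (0 : ℝ)).smul_const g).const_add x
  have hx : x + (0 : ℝ) • g = x := by simp
  have htend : Tendsto (fun t : ℝ => x + t • g) (𝓝 0) (𝓝 x) := by
    simpa using hline.continuousAt.tendsto
  have hgrad : HasDerivAt (fun t : ℝ => gradient u (x + t • g)) (hessian u x g) 0 :=
    HasFDerivAt.comp_hasDerivAt (l := gradient u) 0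
      (by rw [hx]; exact hasFDerivAt_gradient hu₂) hline
  have hhess : HasDerivAt (fun t : ℝ => hessian u (x + t • g)) (fderiv ℝ (hessian u) x g) 0 :=
    HasFDerivAt.comp_hasDerivAt 0 (by rw [hx]; exact hasFDerivAt_hessian hu) hline
  have hright : HasDerivAt (fun t : ℝ => ‖gradient u (x + t • g)‖ ^ s)
      (s * ‖g‖ ^ (s - 2) * inner ℝ g (hessian u x g)) 0 := by
    have hpow := hasFDerivAt_norm_rpow_comp (hasFDerivAt_gradient hu₂) hg s
    exact HasFDerivAt.comp_hasDerivAt (l := fun y => ‖gradient u y‖ ^ s) 0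
      (by rw [hx]; exact hpow) hline
  have hderiv := (hright.congr_of_eventuallyEq (htend.eventually heq)).unique
    (hasDerivAt_pForm (p := p) hgrad hhess)
  simp only [hx, ← hgdef, ← inner_hessian_comm hu₂ g (hessian u x g),
    real_inner_self_eq_norm_sq] at hderiv
  linear_combination -hderiv

/-- The logarithm of Bernstein's test function `|∇u|² u⁻² e^L`, where `e^L` is a cut-off. -/
noncomputable def logBernstein (u L : E → ℝ) (y : E) : ℝ :=
  Real.log (‖gradient u y‖ ^ 2) + (-2) * Real.log (u y) + L y

variable {u L : E → ℝ} {x l : E} {BL : E →L[ℝ] E}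

theorem hasHessianAt_logBernstein (hu : ContDiffAt ℝ 3 u x) (hL : HasHessianAt L l BL x)
    (hux : 0 < u x) (hg : gradient u x ≠ 0) :
    HasHessianAt (logBernstein u L)
      ((2 / ‖gradient u x‖ ^ 2) • hessian u x (gradient u x) - (2 / u x) • gradient u x + l)
      ((2 / ‖gradient u x‖ ^ 2) • ((fderiv ℝ (hessian u) x).flip (gradient u x) +
          (hessian u x).comp (hessian u x))
        - (4 / (‖gradient u x‖ ^ 2) ^ 2) • InnerProductSpace.rankOne ℝ
            (hessian u x (gradient u x)) (hessian u x (gradient u x))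
        - (2 / u x) • hessian u x
        + (2 / u x ^ 2) • InnerProductSpace.rankOne ℝ (gradient u x) (gradient u x) + BL) x := by
  have hgrad := (hasHessianAt_norm_gradient_sq hu).log (by simpa using hg)
  have hlogu := (hasHessianAt_hessian (hu.of_le (by norm_num))).log hux.ne'
  have hsum : HasHessianAt (logBernstein u L) _ _ x :=
    (hgrad.add (hlogu.const_mul (-2))).add hL
  convert hsum using 1
  · module
  · ext v
    simp only [add_apply, sub_apply, smul_apply, InnerProductSpace.rankOne_apply,
      real_inner_smul_left]
    module

theorem hessian_apply_gradient_of_isLocalMax (hu : ContDiffAt ℝ 3 u x)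
    (hL : HasHessianAt L l BL x) (hux : 0 < u x) (hg : gradient u x ≠ 0)
    (hmax : IsLocalMax (logBernstein u L) x) :
    hessian u x (gradient u x) =
      (‖gradient u x‖ ^ 2 / u x) • gradient u x - (‖gradient u x‖ ^ 2 / 2) • l := by
  have hcrit := (hasHessianAt_logBernstein hu hL hux hg).eq_zero_of_isLocalMax hmax
  set g := gradient u x
  have hg₂ : ‖g‖ ^ 2 ≠ 0 := by simpa using hg
  have hscaled : (‖g‖ ^ 2 / 2) • ((2 / ‖g‖ ^ 2) • hessian u x g - (2 / u x) • g + l) = 0 := by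
    rw [hcrit, smul_zero]
  rw [smul_add, smul_sub, smul_smul, smul_smul, div_mul_div_cancel₀' hg₂,
    div_self two_ne_zero, one_smul] at hscaled
  rw [← sub_eq_zero, ← hscaled]
  module

theorem pForm_hessian_logBernstein_nonpos {p : ℝ} (hp : 1 ≤ p) (hu : ContDiffAt ℝ 3 u x)
    (hL : HasHessianAt L l BL x) (hux : 0 < u x) (hg : gradient u x ≠ 0)
    (hmax : IsLocalMax (logBernstein u L) x) :
    2 / ‖gradient u x‖ ^ 2 * (pForm p (gradient u x) (fderiv ℝ (hessian u) x (gradient u x)) +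
        (‖gradient u x‖ ^ 2 * LinearMap.trace ℝ E
            (((hessian u x).comp (hessian u x) : E →L[ℝ] E) : E →ₗ[ℝ] E) +
          (p - 2) * ‖hessian u x (gradient u x)‖ ^ 2))
      - 4 / (‖gradient u x‖ ^ 2) ^ 2 *
        (‖gradient u x‖ ^ 2 * ‖hessian u x (gradient u x)‖ ^ 2 +
          (p - 2) * inner ℝ (gradient u x) (hessian u x (gradient u x)) ^ 2)
      - 2 / u x * pForm p (gradient u x) (hessian u x)
      + 2 / u x ^ 2 * ((p - 1) * (‖gradient u x‖ ^ 2) ^ 2) + pForm p (gradient u x) BL ≤ 0 := by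
  have hform := pForm_nonpos hp
    ((hasHessianAt_logBernstein hu hL hux hg).inner_nonpos_of_isLocalMax hmax) (gradient u x)
  set g := gradient u x
  have hcomp : pForm p g ((hessian u x).comp (hessian u x)) =
      ‖g‖ ^ 2 * LinearMap.trace ℝ E
          (((hessian u x).comp (hessian u x) : E →L[ℝ] E) : E →ₗ[ℝ] E)
        + (p - 2) * ‖hessian u x g‖ ^ 2 := by
    rw [pForm, ContinuousLinearMap.comp_apply, ← inner_hessian_comm (hu.of_le (by norm_num)),
      real_inner_self_eq_norm_sq]
  simp only [pForm_add, pForm_sub, pForm_smul, pForm_flip p (fderiv_hessian_comm hu),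
    pForm_rankOne, hcomp, real_inner_self_eq_norm_sq] at hform
  linear_combination hform

theorem norm_gradient_sq_div_sq_le {p a κ : ℝ} (hp : 1 < p) (ha : 0 < a) (hκ : 0 ≤ κ)
    (hu : ContDiffAt ℝ 3 u x)
    (heq : ∀ᶠ y in 𝓝 x, pForm p (gradient u y) (hessian u y) = ‖gradient u y‖ ^ (a + 3))
    (hL : HasHessianAt L l BL x) (hux : 0 < u x) (hg : gradient u x ≠ 0)
    (hmax : IsLocalMax (logBernstein u L) x)
    (hBL : -(κ * ‖gradient u x‖ ^ 2) ≤ pForm p (gradient u x) BL) :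
    ‖gradient u x‖ ^ 2 / u x ^ 2 ≤ bernsteinConst (Module.finrank ℝ E) p a * (‖l‖ ^ 2 / 4 + κ) := by
  have hn : (0 : ℝ) < Module.finrank ℝ E := by
    have : Nontrivial E := ⟨gradient u x, 0, hg⟩
    exact_mod_cast Module.finrank_pos
  have hcrit := hessian_apply_gradient_of_isLocalMax hu hL hux hg hmax
  have hsecond := pForm_hessian_logBernstein_nonpos hp.le hu hL hux hg hmax
  have hthird := pForm_hessian_deriv hu heq hg
  have heqx := heq.self_of_nhds
  have htrace := sq_trace_sub_div_le (inner_hessian_comm (hu.of_le (by norm_num))) hg (u x)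
  set g := gradient u x
  have hm : 0 < ‖g‖ := norm_pos_iff.2 hg
  have hpow₁ : ‖g‖ ^ (a + 1) = ‖g‖ ^ a * ‖g‖ := Real.rpow_add_one hm.ne' a
  have hpow₃ : ‖g‖ ^ (a + 3) = ‖g‖ ^ 2 * (‖g‖ ^ a * ‖g‖) := by
    rw [show a + 3 = a + 1 + (2 : ℕ) by push_cast; ring, Real.rpow_add_natCast hm.ne', hpow₁]
    ring
  have hθ : (inner ℝ g l / (2 * ‖g‖)) ^ 2 ≤ ‖l‖ ^ 2 / 4 := by
    rw [div_pow, div_le_iff₀ (by positivity)]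
    linear_combination sq_real_inner_le_norm_sq_mul_norm_sq g l
  have hδ : inner ℝ g (hessian u x g) = ‖g‖ ^ 3 * (‖g‖ / u x - inner ℝ g l / (2 * ‖g‖)) := by
    rw [hcrit, inner_sub_right, inner_smul_right, inner_smul_right, real_inner_self_eq_norm_sq]
    field_simp
  rw [← div_pow]
  refine sq_le_bernsteinConst_mul hn hp ha (by positivity : 0 ≤ ‖g‖ ^ a) (by positivity) hθ hκ
    (bernstein_quadratic_le (U := u x) hm (by positivity) (div_mul_cancel₀ _ hux.ne') ?_ hδ ?_
      (by rwa [show a + 3 - 2 = a + 1 by ring, hpow₁] at hthird)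
      (by rwa [heqx, hpow₃] at hsecond) htrace hBL)
  · rw [pForm, hδ, hpow₃] at heqx
    refine mul_left_cancel₀ (pow_ne_zero 2 hm.ne') ?_
    linear_combination heqx
  · rw [hcrit, norm_sub_sq_real, norm_smul, norm_smul, real_inner_smul_left, real_inner_smul_right,
      mul_pow, mul_pow, Real.norm_eq_abs, Real.norm_eq_abs, sq_abs, sq_abs]
    field_simp
    ring

end Bernstein

section StrongSolution

variable {N : ℕ} {p q : ℝ} {G : Set (EuclideanSpace ℝ (Fin N))}
  {u : EuclideanSpace ℝ (Fin N) → ℝ} {x : EuclideanSpace ℝ (Fin N)}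

theorem hasFDerivAt_pGradField (hu : ContDiffAt ℝ 2 u x) (hg : gradient u x ≠ 0) :
    HasFDerivAt (pGradField p u) (‖gradient u x‖ ^ (p - 2) • hessian u x +
      (((p - 2) * ‖gradient u x‖ ^ (p - 4)) •
        (innerSL ℝ (gradient u x)).comp (hessian u x)).smulRight (gradient u x)) x := by
  have hpow := hasFDerivAt_norm_rpow_comp (hasFDerivAt_gradient hu) hg (p - 2)
  rw [sub_sub, show (2 : ℝ) + 2 = 4 by norm_num] at hpow
  exact hpow.smul (hasFDerivAt_gradient hu)

theorem trace_fderiv_pGradField (hu : ContDiffAt ℝ 2 u x) (hg : gradient u x ≠ 0) :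
    LinearMap.trace ℝ (EuclideanSpace ℝ (Fin N)) (fderiv ℝ (pGradField p u) x).toLinearMap =
      ‖gradient u x‖ ^ (p - 4) * pForm p (gradient u x) (hessian u x) := by
  have hpow : ‖gradient u x‖ ^ (p - 2) = ‖gradient u x‖ ^ (p - 4) * ‖gradient u x‖ ^ 2 := by
    rw [← Real.rpow_add_natCast (norm_ne_zero_iff.2 hg)]
    congr 1
    push_cast
    ring
  have htrace : ∀ (f : EuclideanSpace ℝ (Fin N) →L[ℝ] ℝ) (v : EuclideanSpace ℝ (Fin N)),
      LinearMap.trace ℝ _ (f.smulRight v).toLinearMap = f v := fun f v =>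
    LinearMap.trace_smulRight f.toLinearMap v
  rw [(hasFDerivAt_pGradField hu hg).fderiv, ContinuousLinearMap.toLinearMap_add, map_add, htrace,
    ContinuousLinearMap.toLinearMap_smul, map_smul, smul_eq_mul, smul_apply,
    ContinuousLinearMap.comp_apply, innerSL_apply_apply, smul_eq_mul, hpow, pForm]
  ring

namespace IsStrongSolution

theorem add_const (hu : IsStrongSolution p q G u) (c : ℝ) :
    IsStrongSolution p q G (fun y => u y + c) := by
  have hgrad : gradient (fun y => u y + c) = gradient u := by
    ext1 y
    simp [gradient]
  have hfield : pGradField p (fun y => u y + c) = pGradField p u := by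
    ext1 y
    rw [pGradField, hgrad, pGradField]
  refine ⟨hu.1.add contDiffOn_const, ?_, ?_⟩
  · rw [hgrad]
    exact hu.2.1.add contDiffOn_const
  · rw [hgrad, hfield]
    exact hu.2.2

theorem hasGradientAt (hu : IsStrongSolution p q G u) (hG : IsOpen G) (hx : x ∈ G) :
    HasGradientAt u (gradient u x) x :=
  ((hu.1.contDiffAt (hG.mem_nhds hx)).differentiableAt (by norm_num)).hasGradientAt

theorem continuousOn_gradient (hu : IsStrongSolution p q G u) (hG : IsOpen G) :
    ContinuousOn (gradient u) G :=
  (toDualSymmL _).continuous.comp_continuousOn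
    (hu.1.continuousOn_fderiv_of_isOpen hG (by norm_num))

theorem isOpen_regular (hu : IsStrongSolution p q G u) (hG : IsOpen G) :
    IsOpen {y | y ∈ G ∧ gradient u y ≠ 0} :=
  (hu.continuousOn_gradient hG).isOpen_inter_preimage hG isOpen_compl_singleton

theorem contDiffAt (hu : IsStrongSolution p q G u) (hG : IsOpen G) (hx : x ∈ G)
    (hg : gradient u x ≠ 0) : ContDiffAt ℝ 3 u x :=
  hu.2.1.contDiffAt ((hu.isOpen_regular hG).mem_nhds ⟨hx, hg⟩)

theorem pForm_hessian_eq (hu : IsStrongSolution p q G u) (hG : IsOpen G) (hx : x ∈ G)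
    (hg : gradient u x ≠ 0) :
    pForm p (gradient u x) (hessian u x) = ‖gradient u x‖ ^ (q - p + 1 + 3) := by
  have hgn : 0 < ‖gradient u x‖ := norm_pos_iff.2 hg
  have heq := (hu.2.2 x hx).2
  rw [trace_fderiv_pGradField ((hu.contDiffAt hG hx hg).of_le (by norm_num)) hg,
    show q = p - 4 + (q - p + 1 + 3) by ring, Real.rpow_add hgn] at heq
  exact mul_left_cancel₀ (Real.rpow_pos_of_pos hgn _).ne' heq

theorem pForm_nonneg_of_isLocalMax_sub (hu : IsStrongSolution p q G u) (hG : IsOpen G)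
    (hp : 1 ≤ p) (hx : x ∈ G) {ψ : EuclideanSpace ℝ (Fin N) → ℝ} {g : EuclideanSpace ℝ (Fin N)}
    {B : EuclideanSpace ℝ (Fin N) →L[ℝ] EuclideanSpace ℝ (Fin N)} (hψ : HasHessianAt ψ g B x)
    (hg : g ≠ 0) (hmax : IsLocalMax (fun y => u y - ψ y) x) : 0 ≤ pForm p g B := by
  have hgrad : gradient u x = g := by
    have hsub := (hasGradientAt_iff_hasFDerivAt_innerSL.1 (hu.hasGradientAt hG hx)).sub
      (hasGradientAt_iff_hasFDerivAt_innerSL.1 hψ.hasGradientAt)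
    have hzero := hmax.hasFDerivAt_eq_zero hsub
    exact innerSL_inj.1 (sub_eq_zero.1 hzero)
  subst hgrad
  have hsub := (hasHessianAt_hessian ((hu.contDiffAt hG hx hg).of_le (by norm_num))).sub hψ
  have hnonpos := pForm_nonpos hp (hsub.inner_nonpos_of_isLocalMax hmax) (gradient u x)
  rw [pForm_sub, hu.pForm_hessian_eq hG hx hg] at hnonpos
  exact (Real.rpow_nonneg (norm_nonneg _) _).trans (sub_nonpos.1 hnonpos)

end IsStrongSolution

end StrongSolution

section GradientEstimate

theorem sq_sub_norm_sub_sq_pos {E : Type*} [SeminormedAddCommGroup E] {c x : E} {R : ℝ}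
    (hx : x ∈ ball c R) : 0 < R ^ 2 - ‖x - c‖ ^ 2 := by
  have := mem_ball_iff_norm.1 hx
  have : ‖x - c‖ ^ 2 < R ^ 2 := by gcongr
  linarith

variable {E : Type*} [NormedAddCommGroup E] [InnerProductSpace ℝ E]

theorem hasHessianAt_log_cutoff [CompleteSpace E] {c x : E} {R : ℝ} (hx : x ∈ ball c R) :
    HasHessianAt (fun y => 2 * Real.log (R ^ 2 - ‖y - c‖ ^ 2))
      (-(4 / (R ^ 2 - ‖x - c‖ ^ 2)) • (x - c))
      (-(4 / (R ^ 2 - ‖x - c‖ ^ 2)) • ContinuousLinearMap.id ℝ E +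
        -(8 / (R ^ 2 - ‖x - c‖ ^ 2) ^ 2) • InnerProductSpace.rankOne ℝ (x - c) (x - c)) x := by
  have hd := sq_sub_norm_sub_sq_pos hx
  have hfirst : ∀ t : ℝ, t < R ^ 2 →
      HasDerivAt (fun t => 2 * Real.log (R ^ 2 - t)) (-2 / (R ^ 2 - t)) t := fun t ht => by
    refine ((((hasDerivAt_id t).const_sub (R ^ 2)).log
      (sub_ne_zero.2 ht.ne')).const_mul 2).congr_deriv ?_
    rw [id]
    ring
  have hsecond : HasDerivAt (fun t => -2 / (R ^ 2 - t)) (-2 / (R ^ 2 - ‖x - c‖ ^ 2) ^ 2)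
      (‖x - c‖ ^ 2) := by
    refine ((hasDerivAt_const _ (-2 : ℝ)).fun_div
      ((hasDerivAt_id (‖x - c‖ ^ 2)).const_sub (R ^ 2)) hd.ne').congr_deriv ?_
    rw [id]
    ring
  convert hasHessianAt_comp_norm_sub_sq ((eventually_lt_nhds (sub_pos.1 hd)).mono hfirst) hsecond
    using 3 <;> ring

variable [FiniteDimensional ℝ E]

theorem neg_le_pForm_log_cutoff {p : ℝ} (hp : 1 ≤ p) {c x g : E} (hg : g ≠ 0) {R : ℝ}
    (hx : x ∈ ball c R) :
    -((4 * (Module.finrank ℝ E + p - 2) + 8 * (1 + |p - 2|)) * R ^ 2 /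
        (R ^ 2 - ‖x - c‖ ^ 2) ^ 2 * ‖g‖ ^ 2)
      ≤ pForm p g (-(4 / (R ^ 2 - ‖x - c‖ ^ 2)) • ContinuousLinearMap.id ℝ E +
        -(8 / (R ^ 2 - ‖x - c‖ ^ 2) ^ 2) • InnerProductSpace.rankOne ℝ (x - c) (x - c)) := by
  have hn : (1 : ℝ) ≤ Module.finrank ℝ E := by
    have : Nontrivial E := ⟨g, 0, hg⟩
    exact_mod_cast (Module.finrank_pos : 0 < Module.finrank ℝ E)
  have hd := sq_sub_norm_sub_sq_pos hx
  rw [pForm_add, pForm_smul, pForm_smul, pForm_id, pForm_rankOne]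
  set d := R ^ 2 - ‖x - c‖ ^ 2
  have hxR : ‖x - c‖ ^ 2 ≤ R ^ 2 := (sub_pos.1 hd).le
  have hid : d * ((Module.finrank ℝ E + p - 2) * ‖g‖ ^ 2) ≤
      R ^ 2 * ((Module.finrank ℝ E + p - 2) * ‖g‖ ^ 2) :=
    mul_le_mul_of_nonneg_right (sub_le_self _ (sq_nonneg _))
      (mul_nonneg (by linarith) (sq_nonneg _))
  have hinner : inner ℝ g (x - c) ^ 2 ≤ ‖g‖ ^ 2 * R ^ 2 := by
    grw [sq_real_inner_le_norm_sq_mul_norm_sq, hxR]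
  have hrank : ‖g‖ ^ 2 * ‖x - c‖ ^ 2 + (p - 2) * inner ℝ g (x - c) ^ 2 ≤
      (1 + |p - 2|) * (‖g‖ ^ 2 * R ^ 2) := by
    calc ‖g‖ ^ 2 * ‖x - c‖ ^ 2 + (p - 2) * inner ℝ g (x - c) ^ 2
        ≤ ‖g‖ ^ 2 * R ^ 2 + |p - 2| * (‖g‖ ^ 2 * R ^ 2) := by
          gcongr
          exact le_abs_self _
      _ = (1 + |p - 2|) * (‖g‖ ^ 2 * R ^ 2) := by ring
  calc _ = -((4 * (R ^ 2 * ((Module.finrank ℝ E + p - 2) * ‖g‖ ^ 2)) +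
        8 * ((1 + |p - 2|) * (‖g‖ ^ 2 * R ^ 2))) / d ^ 2) := by ring
    _ ≤ -((4 * (d * ((Module.finrank ℝ E + p - 2) * ‖g‖ ^ 2)) +
        8 * (‖g‖ ^ 2 * ‖x - c‖ ^ 2 + (p - 2) * inner ℝ g (x - c) ^ 2)) / d ^ 2) := by gcongr
    _ = _ := by
      field_simp
      ring

theorem exists_isLocalMax_cutoff_mul {f : E → ℝ} {c : E} {R : ℝ} (hR : 0 < R)
    (hf : ContinuousOn f (closedBall c R)) (hc : 0 < f c) :
    ∃ x ∈ ball c R, IsLocalMax (fun y => (R ^ 2 - ‖y - c‖ ^ 2) ^ 2 * f y) x ∧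
      R ^ 4 * f c ≤ (R ^ 2 - ‖x - c‖ ^ 2) ^ 2 * f x := by
  have hcont : ContinuousOn (fun y => (R ^ 2 - ‖y - c‖ ^ 2) ^ 2 * f y) (closedBall c R) :=
    ContinuousOn.mul (by fun_prop) hf
  obtain ⟨x, hx, hmax⟩ := (isCompact_closedBall c R).exists_isMaxOn
    ⟨c, mem_closedBall_self hR.le⟩ hcont
  have hle : R ^ 4 * f c ≤ (R ^ 2 - ‖x - c‖ ^ 2) ^ 2 * f x := by
    calc R ^ 4 * f c = (R ^ 2 - ‖c - c‖ ^ 2) ^ 2 * f c := by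
          rw [sub_self, norm_zero]
          ring
      _ ≤ _ := hmax (mem_closedBall_self hR.le)
  have hball : x ∈ ball c R := by
    refine mem_ball_iff_norm.2 ((mem_closedBall_iff_norm.1 hx).lt_of_ne fun h => ?_)
    rw [h, sub_self, zero_pow two_ne_zero, zero_mul] at hle
    exact hle.not_gt (by positivity)
  exact ⟨x, hball, hmax.isLocalMax (closedBall_mem_nhds_of_mem hball), hle⟩

theorem logBernstein_log_cutoff {u : E → ℝ} {c y : E} {R : ℝ} (hy : y ∈ ball c R)
    (hu : 0 < u y) (hg : gradient u y ≠ 0) :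
    logBernstein u (fun y => 2 * Real.log (R ^ 2 - ‖y - c‖ ^ 2)) y =
      Real.log ((R ^ 2 - ‖y - c‖ ^ 2) ^ 2 * (‖gradient u y‖ ^ 2 / u y ^ 2)) := by
  have := sq_sub_norm_sub_sq_pos hy
  have := norm_pos_iff.2 hg
  rw [logBernstein, Real.log_mul (by positivity) (by positivity),
    Real.log_div (by positivity) (by positivity), Real.log_pow (u y) 2,
    Real.log_pow (R ^ 2 - ‖y - c‖ ^ 2) 2]
  push_cast
  ring

theorem isLocalMax_logBernstein_log_cutoff {u : E → ℝ} {c x : E} {R : ℝ} (hx : x ∈ ball c R)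
    (hu : ∀ᶠ y in 𝓝 x, 0 < u y ∧ gradient u y ≠ 0)
    (hmax : IsLocalMax (fun y => (R ^ 2 - ‖y - c‖ ^ 2) ^ 2 * (‖gradient u y‖ ^ 2 / u y ^ 2)) x) :
    IsLocalMax (logBernstein u fun y => 2 * Real.log (R ^ 2 - ‖y - c‖ ^ 2)) x := by
  filter_upwards [hmax, hu, isOpen_ball.mem_nhds hx] with y hy ⟨huy, hgy⟩ hyball
  have := sq_sub_norm_sub_sq_pos hyball
  have := norm_pos_iff.2 hgy
  obtain ⟨hux, hgx⟩ := hu.self_of_nhds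
  rw [logBernstein_log_cutoff hyball huy hgy, logBernstein_log_cutoff hx hux hgx]
  exact Real.log_le_log (by positivity) hy

/-- The constant `C` in the interior gradient estimate `R |∇u(c)| ≤ C u(c)` for nonnegative strong
solutions on `B(c, R)`, in dimension `n` and with `a = q - p + 1`. -/
noncomputable def gradientConst (n p a : ℝ) : ℝ :=
  √(bernsteinConst n p a * (4 + (4 * (n + p - 2) + 8 * (1 + |p - 2|))))

theorem gradientConst_nonneg (n p a : ℝ) : 0 ≤ gradientConst n p a := Real.sqrt_nonneg _

namespace IsStrongSolution

variable {N : ℕ} {p q R : ℝ} {G : Set (EuclideanSpace ℝ (Fin N))}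
  {u : EuclideanSpace ℝ (Fin N) → ℝ} {c x : EuclideanSpace ℝ (Fin N)}

theorem norm_gradient_sq_div_sq_le_of_isLocalMax (hu : IsStrongSolution p q G u) (hG : IsOpen G)
    (hp : 1 < p) (hq : p - 1 < q) (hpos : ∀ y ∈ G, 0 < u y) (hxG : x ∈ G) (hx : x ∈ ball c R)
    (hg : gradient u x ≠ 0)
    (hmax : IsLocalMax (fun y => (R ^ 2 - ‖y - c‖ ^ 2) ^ 2 * (‖gradient u y‖ ^ 2 / u y ^ 2)) x) :
    (R ^ 2 - ‖x - c‖ ^ 2) ^ 2 * (‖gradient u x‖ ^ 2 / u x ^ 2) ≤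
      (gradientConst N p (q - p + 1) * R) ^ 2 := by
  have hN : 1 ≤ N := Nat.one_le_iff_ne_zero.2 fun h => by
    subst h
    exact hg (Subsingleton.elim _ _)
  have hNr : (1 : ℝ) ≤ N := by exact_mod_cast hN
  have hreg := (hu.isOpen_regular hG).mem_nhds ⟨hxG, hg⟩
  have hd := sq_sub_norm_sub_sq_pos hx
  have hK : 0 ≤ 4 * (N + p - 2) + 8 * (1 + |p - 2|) := by
    linarith [abs_nonneg (p - 2)]
  have hbernstein := norm_gradient_sq_div_sq_le hp (by linarith)
    (by rw [finrank_euclideanSpace_fin]; positivity) (hu.contDiffAt hG hxG hg)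
    (eventually_of_mem hreg fun y hy => hu.pForm_hessian_eq hG hy.1 hy.2)
    (hasHessianAt_log_cutoff hx) (hpos x hxG) hg
    (isLocalMax_logBernstein_log_cutoff hx
      (eventually_of_mem hreg fun y hy => ⟨hpos y hy.1, hy.2⟩) hmax)
    (neg_le_pForm_log_cutoff hp.le hg hx)
  have hb := bernsteinConst_pos (n := N) (a := q - p + 1) (by linarith) hp (by linarith)
  rw [finrank_euclideanSpace_fin, norm_smul, mul_pow, norm_neg, Real.norm_eq_abs,
    sq_abs] at hbernstein
  rw [mul_pow, gradientConst, Real.sq_sqrt (by positivity)]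
  set K := 4 * (N + p - 2) + 8 * (1 + |p - 2|)
  set d := R ^ 2 - ‖x - c‖ ^ 2
  calc d ^ 2 * (‖gradient u x‖ ^ 2 / u x ^ 2)
      ≤ d ^ 2 * (bernsteinConst N p (q - p + 1) *
          ((4 / d) ^ 2 * ‖x - c‖ ^ 2 / 4 + K * R ^ 2 / d ^ 2)) := by gcongr
    _ = bernsteinConst N p (q - p + 1) * (4 * ‖x - c‖ ^ 2 + K * R ^ 2) := by
      field_simp
    _ ≤ bernsteinConst N p (q - p + 1) * (4 * R ^ 2 + K * R ^ 2) := by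
      gcongr
      exact (mem_ball_iff_norm.1 hx).le
    _ = _ := by ring

theorem norm_gradient_le_of_pos (hu : IsStrongSolution p q G u) (hG : IsOpen G) (hp : 1 < p)
    (hq : p - 1 < q) (hpos : ∀ y ∈ G, 0 < u y) (hR : 0 < R) (hball : closedBall c R ⊆ G) :
    ‖gradient u c‖ ≤ gradientConst N p (q - p + 1) / R * u c := by
  have huc := hpos c (hball (mem_closedBall_self hR.le))
  have hC := gradientConst_nonneg N p (q - p + 1)
  rcases eq_or_ne (gradient u c) 0 with hgc | hgc
  · rw [hgc, norm_zero]
    positivity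
  have hcont : ContinuousOn (fun y => ‖gradient u y‖ ^ 2 / u y ^ 2) (closedBall c R) :=
    (((hu.continuousOn_gradient hG).mono hball).norm.pow 2).div
      ((hu.1.continuousOn.mono hball).pow 2) fun y hy => (pow_pos (hpos y (hball hy)) 2).ne'
  have hpos_c : 0 < ‖gradient u c‖ ^ 2 / u c ^ 2 := by
    have := norm_pos_iff.2 hgc
    positivity
  obtain ⟨x, hx, hmax, hle⟩ := exists_isLocalMax_cutoff_mul hR hcont hpos_c
  have hxG := hball (ball_subset_closedBall hx)
  have hgx : gradient u x ≠ 0 := fun h => by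
    rw [h, norm_zero, zero_pow two_ne_zero, zero_div, mul_zero] at hle
    exact hle.not_gt (by positivity)
  have hsq := hle.trans
    (hu.norm_gradient_sq_div_sq_le_of_isLocalMax hG hp hq hpos hxG hx hgx hmax)
  rw [← div_pow, show R ^ 4 = (R ^ 2) ^ 2 by ring, ← mul_pow] at hsq
  have hlin := le_of_sq_le_sq hsq (by positivity)
  calc ‖gradient u c‖ = R ^ 2 * (‖gradient u c‖ / u c) / R ^ 2 * u c := by field_simp
    _ ≤ gradientConst N p (q - p + 1) * R / R ^ 2 * u c := by gcongr
    _ = gradientConst N p (q - p + 1) / R * u c := by field_simp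

theorem norm_gradient_le (hu : IsStrongSolution p q G u) (hG : IsOpen G) (hp : 1 < p)
    (hq : p - 1 < q) (hpos : ∀ y ∈ G, 0 ≤ u y) (hR : 0 < R) (hball : closedBall c R ⊆ G) :
    ‖gradient u c‖ ≤ gradientConst N p (q - p + 1) / R * u c := by
  have hshift : ∀ ε > 0, ‖gradient u c‖ ≤ gradientConst N p (q - p + 1) / R * (u c + ε) :=
    fun ε hε => by
      have := (hu.add_const ε).norm_gradient_le_of_pos hG hp hq
        (fun y hy => add_pos_of_nonneg_of_pos (hpos y hy) hε) hR hball
      simpa [gradient] using this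
  refine ge_of_tendsto (x := 𝓝[>] 0) ?_ (eventually_mem_nhdsWithin.mono hshift)
  exact tendsto_nhdsWithin_of_tendsto_nhds (Continuous.tendsto' (by fun_prop) _ _ (by simp))

end IsStrongSolution

end GradientEstimate

section Harnack

theorem exists_inner_eq_zero_norm_eq {E : Type*} [NormedAddCommGroup E] [InnerProductSpace ℝ E]
    [FiniteDimensional ℝ E] (hE : 2 ≤ Module.finrank ℝ E) (a : E) :
    ∃ c : E, inner ℝ a c = 0 ∧ ‖c‖ = ‖a‖ := by
  rcases eq_or_ne a 0 with rfl | ha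
  · exact ⟨0, by simp, rfl⟩
  obtain ⟨n, hn⟩ : ∃ n, Module.finrank ℝ E = (n + 1) + 1 := ⟨_, (Nat.sub_add_cancel hE).symm⟩
  obtain ⟨b, hb⟩ := exists_orthonormalBasis_eq_norm_smul hn ha
  refine ⟨‖a‖ • b 1, ?_, ?_⟩
  · rw [inner_smul_right, hb, real_inner_smul_left, b.inner_eq_zero (by simp), mul_zero, mul_zero]
  · rw [norm_smul, b.norm_eq_one, norm_norm, mul_one]

theorem half_le_norm_of_mem_segment {E : Type*} [NormedAddCommGroup E] [InnerProductSpace ℝ E]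
    {a b y : E} (hnorm : ‖b‖ = ‖a‖) (hinner : 0 ≤ inner ℝ a b) (hy : y ∈ segment ℝ a b) :
    ‖a‖ / 2 ≤ ‖y‖ := by
  obtain ⟨s, t, hs, ht, hst, rfl⟩ := hy
  refine le_of_sq_le_sq ?_ (norm_nonneg _)
  rw [norm_add_sq_real, norm_smul, norm_smul, real_inner_smul_left, real_inner_smul_right, hnorm,
    Real.norm_of_nonneg hs, Real.norm_of_nonneg ht]
  obtain rfl : t = 1 - s := (sub_eq_of_eq_add' hst.symm).symm
  have : 0 ≤ 2 * (s * ((1 - s) * inner ℝ a b)) := by positivity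
  linarith [sq_nonneg ((2 * s - 1) * ‖a‖), sq_nonneg ‖a‖]

theorem le_exp_mul_of_norm_gradient_le {E : Type*} [NormedAddCommGroup E] [InnerProductSpace ℝ E]
    [CompleteSpace E] {u : E → ℝ} {a b : E} {M : ℝ} (hu : ∀ y ∈ segment ℝ a b, 0 ≤ u y)
    (hd : ∀ y ∈ segment ℝ a b, HasGradientAt u (gradient u y) y)
    (hM : ∀ y ∈ segment ℝ a b, ‖gradient u y‖ ≤ M * u y) :
    u b ≤ Real.exp (M * ‖b - a‖) * u a := by
  have hmem : ∀ t ∈ Icc (0 : ℝ) 1, AffineMap.lineMap a b t ∈ segment ℝ a b := fun t ht => by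
    rw [segment_eq_image_lineMap]
    exact mem_image_of_mem _ ht
  have hderiv : ∀ t ∈ Icc (0 : ℝ) 1, HasDerivAt (fun t => u (AffineMap.lineMap a b t))
      (inner ℝ (gradient u (AffineMap.lineMap a b t)) (b - a)) t := fun t ht =>
    (hasGradientAt_iff_hasFDerivAt_innerSL.1 (hd _ (hmem t ht))).comp_hasDerivAt t
      AffineMap.hasDerivAt_lineMap
  have hgronwall := norm_le_gronwallBound_of_norm_deriv_right_le (δ := u a) (ε := 0)
    (K := M * ‖b - a‖) (fun t ht => (hderiv t ht).continuousAt.continuousWithinAt)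
    (fun t ht => (hderiv t (Ico_subset_Icc_self ht)).hasDerivWithinAt)
    (by simp [abs_of_nonneg (hu a (left_mem_segment ℝ a b))])
    (fun t ht => by
      have hseg := hmem t (Ico_subset_Icc_self ht)
      rw [Real.norm_of_nonneg (hu _ hseg), add_zero]
      calc _ ≤ ‖gradient u (AffineMap.lineMap a b t)‖ * ‖b - a‖ := abs_real_inner_le_norm _ _
        _ ≤ M * u (AffineMap.lineMap a b t) * ‖b - a‖ := by
          gcongr
          exact hM _ hseg
        _ = _ := by ring) 1 (right_mem_Icc.2 zero_le_one)
  rw [AffineMap.lineMap_apply_one, gronwallBound_ε0, sub_zero, mul_one, mul_comm] at hgronwall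
  exact (le_abs_self _).trans hgronwall

namespace IsStrongSolution

variable {N : ℕ} {p q R : ℝ} {G : Set (EuclideanSpace ℝ (Fin N))}
  {u : EuclideanSpace ℝ (Fin N) → ℝ} {a b : EuclideanSpace ℝ (Fin N)}

theorem norm_gradient_le_of_punctured_ball (hu : IsStrongSolution p q G u) (hG : IsOpen G)
    (hp : 1 < p) (hq : p - 1 < q) (hpos : ∀ y ∈ G, 0 ≤ u y) (hR : closedBall 0 R \ {0} ⊆ G)
    (ha : a ≠ 0) (haR : ‖a‖ ≤ R / 2) :
    ‖gradient u a‖ ≤ 2 * gradientConst N p (q - p + 1) / ‖a‖ * u a := by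
  have ha' := norm_pos_iff.2 ha
  have hball : closedBall a (‖a‖ / 2) ⊆ G := fun y hy => by
    refine hR ⟨mem_closedBall_zero_iff.2 ?_, ?_⟩
    · linarith [norm_le_of_mem_closedBall hy]
    · rintro rfl
      rw [mem_closedBall, dist_zero_left] at hy
      linarith
  calc ‖gradient u a‖ ≤ _ := hu.norm_gradient_le hG hp hq hpos (half_pos ha') hball
    _ = _ := by field_simp

theorem le_exp_mul_of_segment (hu : IsStrongSolution p q G u) (hG : IsOpen G) (hp : 1 < p)
    (hq : p - 1 < q) (hpos : ∀ y ∈ G, 0 ≤ u y) (hR : closedBall 0 R \ {0} ⊆ G) {ρ : ℝ} (hρ : 0 < ρ)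
    (hseg : ∀ y ∈ segment ℝ a b, ρ ≤ ‖y‖ ∧ ‖y‖ ≤ R / 2) :
    u b ≤ Real.exp (2 * gradientConst N p (q - p + 1) / ρ * ‖b - a‖) * u a := by
  have hne : ∀ y ∈ segment ℝ a b, 0 < ‖y‖ := fun y hy => hρ.trans_le (hseg y hy).1
  have hmem : ∀ y ∈ segment ℝ a b, y ∈ G := fun y hy => by
    refine hR ⟨mem_closedBall_zero_iff.2 ?_, norm_pos_iff.1 (hne y hy)⟩
    linarith [hne y hy, (hseg y hy).2]
  have hC := gradientConst_nonneg N p (q - p + 1)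
  refine le_exp_mul_of_norm_gradient_le (fun y hy => hpos y (hmem y hy))
    (fun y hy => hu.hasGradientAt hG (hmem y hy)) fun y hy => ?_
  refine (hu.norm_gradient_le_of_punctured_ball hG hp hq hpos hR
    (norm_pos_iff.1 (hne y hy)) (hseg y hy).2).trans ?_
  have := hpos y (hmem y hy)
  gcongr
  exact (hseg y hy).1

theorem le_exp_mul_of_inner_nonneg (hu : IsStrongSolution p q G u) (hG : IsOpen G) (hp : 1 < p)
    (hq : p - 1 < q) (hpos : ∀ y ∈ G, 0 ≤ u y) (hR : closedBall 0 R \ {0} ⊆ G) (ha : a ≠ 0)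
    (haR : ‖a‖ ≤ R / 2) (hnorm : ‖b‖ = ‖a‖) (hinner : 0 ≤ inner ℝ a b) :
    u b ≤ Real.exp (8 * gradientConst N p (q - p + 1)) * u a := by
  have ha' := norm_pos_iff.2 ha
  have hC := gradientConst_nonneg N p (q - p + 1)
  have hseg : ∀ y ∈ segment ℝ a b, ‖a‖ / 2 ≤ ‖y‖ ∧ ‖y‖ ≤ R / 2 := fun y hy => by
    refine ⟨half_le_norm_of_mem_segment hnorm hinner hy, ?_⟩
    rw [← mem_closedBall_zero_iff]
    exact (convex_closedBall 0 (R / 2)).segment_subset (by simpa using haR)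
      (by simpa [hnorm] using haR) hy
  have hua : 0 ≤ u a := hpos a (hR ⟨by rw [mem_closedBall_zero_iff]; linarith, ha⟩)
  refine (hu.le_exp_mul_of_segment hG hp hq hpos hR (half_pos ha') hseg).trans
    (mul_le_mul_of_nonneg_right (Real.exp_le_exp.2 ?_) hua)
  calc 2 * gradientConst N p (q - p + 1) / (‖a‖ / 2) * ‖b - a‖
      ≤ 2 * gradientConst N p (q - p + 1) / (‖a‖ / 2) * (2 * ‖a‖) := by
        gcongr
        linarith [norm_sub_le b a]
    _ = 8 * gradientConst N p (q - p + 1) := by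
      field_simp
      ring

theorem sphere_harnack (hu : IsStrongSolution p q G u) (hG : IsOpen G) (hN : 2 ≤ N)
    (hp : 1 < p) (hq : p - 1 < q) (hpos : ∀ y ∈ G, 0 ≤ u y) (hR : closedBall 0 R \ {0} ⊆ G)
    (ha : a ≠ 0) (haR : ‖a‖ ≤ R / 2) (hab : ‖b‖ = ‖a‖) :
    u b ≤ Real.exp (16 * gradientConst N p (q - p + 1)) * u a := by
  obtain ⟨c, hc, hcb, hac⟩ : ∃ c : EuclideanSpace ℝ (Fin N),
      ‖c‖ = ‖a‖ ∧ 0 ≤ inner ℝ c b ∧ inner ℝ a c = 0 := by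
    obtain ⟨c, hac, hc⟩ := exists_inner_eq_zero_norm_eq (by simpa using hN) a
    rcases le_total 0 (inner ℝ c b) with h | h
    · exact ⟨c, hc, h, hac⟩
    · exact ⟨-c, by rwa [norm_neg], by simpa using h, by simpa using hac⟩
  set C := gradientConst N p (q - p + 1)
  have hc₀ : c ≠ 0 := norm_pos_iff.1 (hc ▸ norm_pos_iff.2 ha)
  calc u b ≤ Real.exp (8 * C) * u c :=
        hu.le_exp_mul_of_inner_nonneg hG hp hq hpos hR hc₀ (hc ▸ haR) (hab.trans hc.symm) hcb
    _ ≤ Real.exp (8 * C) * (Real.exp (8 * C) * u a) := by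
      gcongr
      exact hu.le_exp_mul_of_inner_nonneg hG hp hq hpos hR ha haR hc hac.ge
    _ = Real.exp (16 * C) * u a := by
      rw [← mul_assoc, ← Real.exp_add]
      ring_nf

end IsStrongSolution

end Harnack

section PSubharmonic

variable {E : Type*} [NormedAddCommGroup E] [InnerProductSpace ℝ E] [CompleteSpace E]
  {p : ℝ} {f ψ : E → ℝ} {G K : Set E} {x : E}

/-- `ψ` is twice differentiable at `x`, with `∇ψ(x) ≠ 0` and `Δ_p ψ(x) < 0`. -/
def IsStrictSupersolutionAt (p : ℝ) (ψ : E → ℝ) (x : E) : Prop :=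
  ∃ g B, HasHessianAt ψ g B x ∧ g ≠ 0 ∧ pForm p g B < 0

/-- `f` is continuous and obeys comparison on compact subsets of `G` with strict supersolutions of
the `p`-Laplace equation. Unlike a differential inequality in the viscosity sense, this form of
`p`-subharmonicity passes directly to locally uniform limits. -/
def IsPSubharmonicOn (p : ℝ) (f : E → ℝ) (G : Set E) : Prop :=
  ContinuousOn f G ∧ ∀ K ⊆ G, IsCompact K → ∀ ψ : E → ℝ, ContinuousOn ψ K →
    (∀ x ∈ interior K, IsStrictSupersolutionAt p ψ x) → (∀ x ∈ frontier K, f x ≤ ψ x) →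
      ∀ x ∈ K, f x ≤ ψ x

theorem IsStrictSupersolutionAt.add_const (h : IsStrictSupersolutionAt p ψ x) (c : ℝ) :
    IsStrictSupersolutionAt p (fun y => ψ y + c) x := by
  obtain ⟨g, B, ⟨D, hD, hg, hB⟩, hg0, hneg⟩ := h
  refine ⟨g, B, ⟨D, hD.mono fun y hy => ?_, hg, hB⟩, hg0, hneg⟩
  rw [hasGradientAt_iff_hasFDerivAt_innerSL] at *
  exact hy.add_const c

theorem IsStrictSupersolutionAt.const_mul {c : ℝ} (hc : 0 < c)
    (h : IsStrictSupersolutionAt p ψ x) : IsStrictSupersolutionAt p (fun y => c * ψ y) x := by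
  obtain ⟨g, B, hgB, hg0, hneg⟩ := h
  refine ⟨_, _, hgB.const_mul c, smul_ne_zero hc.ne' hg0, ?_⟩
  rw [pForm_smul_left, pForm_smul]
  exact mul_neg_of_pos_of_neg (by positivity) (mul_neg_of_pos_of_neg hc hneg)

theorem IsStrictSupersolutionAt.comp_smul {s : ℝ} (hs : s ≠ 0)
    (h : IsStrictSupersolutionAt p ψ (s • x)) :
    IsStrictSupersolutionAt p (fun y => ψ (s • y)) x := by
  obtain ⟨g, B, hgB, hg0, hneg⟩ := h
  refine ⟨_, _, hgB.comp_smul, smul_ne_zero hs hg0, ?_⟩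
  rw [pForm_smul_left, pForm_smul]
  exact mul_neg_of_pos_of_neg (by positivity) (mul_neg_of_pos_of_neg (by positivity) hneg)

theorem IsStrongSolution.isPSubharmonicOn {N : ℕ} {q : ℝ} {G : Set (EuclideanSpace ℝ (Fin N))}
    {u : EuclideanSpace ℝ (Fin N) → ℝ} (hu : IsStrongSolution p q G u) (hG : IsOpen G)
    (hp : 1 ≤ p) : IsPSubharmonicOn p u G := by
  refine ⟨hu.1.continuousOn, fun K hKG hK ψ hψ hsuper hfr x hx => ?_⟩
  by_contra! hlt
  obtain ⟨z, hz, hmax⟩ := hK.exists_isMaxOn ⟨x, hx⟩ ((hu.1.continuousOn.mono hKG).sub hψ)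
  have hzx : u x - ψ x ≤ u z - ψ z := hmax hx
  have hzint : z ∈ interior K := by
    rw [← self_sdiff_frontier]
    exact ⟨hz, fun hzfr => by linarith [hfr z hzfr]⟩
  obtain ⟨g, B, hgB, hg0, hneg⟩ := hsuper z hzint
  have hloc : IsLocalMax (fun y => u y - ψ y) z :=
    hmax.isLocalMax (mem_interior_iff_mem_nhds.1 hzint)
  exact hneg.not_ge (hu.pForm_nonneg_of_isLocalMax_sub hG hp (hKG hz) hgB hg0 hloc)

namespace IsPSubharmonicOn

theorem mono {G' : Set E} (hf : IsPSubharmonicOn p f G) (h : G' ⊆ G) : IsPSubharmonicOn p f G' :=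
  ⟨hf.1.mono h, fun K hK => hf.2 K (hK.trans h)⟩

open scoped Pointwise in
theorem const_mul_comp_smul (hf : IsPSubharmonicOn p f G) {c s : ℝ} (hc : 0 < c) (hs : s ≠ 0) :
    IsPSubharmonicOn p (fun y => c * f (s • y)) {y | s • y ∈ G} := by
  refine ⟨continuousOn_const.mul (hf.1.comp (by fun_prop) fun y hy => hy),
    fun K hKG hK ψ hψ hsuper hfr x hx => ?_⟩
  have hunscale : ∀ y ∈ s • K, s⁻¹ • y ∈ K := fun y =>
    (mem_smul_set_iff_inv_smul_mem₀ hs K y).1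
  have hfrontier : frontier (s • K) = s • frontier K :=
    ((Homeomorph.smulOfNeZero s hs).image_frontier K).symm
  have hle : ∀ y ∈ s • K, f y ≤ c⁻¹ * ψ (s⁻¹ • y) := by
    refine hf.2 (s • K) (by rintro - ⟨y, hy, rfl⟩; exact hKG hy) (hK.smul s) _
      (continuousOn_const.mul (hψ.comp (by fun_prop) hunscale)) (fun y hy => ?_) fun y hy => ?_
    · rw [interior_smul₀ hs, mem_smul_set_iff_inv_smul_mem₀ hs] at hy
      exact ((hsuper _ hy).comp_smul (inv_ne_zero hs)).const_mul (inv_pos.2 hc)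
    · rw [hfrontier, mem_smul_set_iff_inv_smul_mem₀ hs] at hy
      have hle : c * f (s • s⁻¹ • y) ≤ ψ (s⁻¹ • y) := hfr _ hy
      rwa [smul_inv_smul₀ hs, ← le_inv_mul_iff₀ hc] at hle
  have := hle (s • x) (smul_mem_smul_set hx)
  rwa [inv_smul_smul₀ hs, le_inv_mul_iff₀ hc] at this

theorem of_tendstoLocallyUniformlyOn [LocallyCompactSpace E] {ι : Type*} {l : Filter ι} [l.NeBot]
    {F : ι → E → ℝ} (hG : IsOpen G) (hlim : TendstoLocallyUniformlyOn F f l G)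
    (hF : ∀ K ⊆ G, IsCompact K → ∀ᶠ i in l, IsPSubharmonicOn p (F i) K) :
    IsPSubharmonicOn p f G := by
  rw [tendstoLocallyUniformlyOn_iff_forall_isCompact hG] at hlim
  refine ⟨fun x hx => ?_, fun K hKG hK ψ hψ hsuper hfr x hx =>
    le_of_forall_pos_le_add fun ε hε => ?_⟩
  · obtain ⟨K, hK, hxK, hKG⟩ := exists_compact_subset hG hx
    have hcont : ContinuousOn f K := (hlim K hKG hK).continuousOn
      ((hF K hKG hK).mono fun i hi => hi.1).frequently
    exact (hcont.continuousAt (mem_interior_iff_mem_nhds.1 hxK)).continuousWithinAt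
  · obtain ⟨i, hi, hclose⟩ := ((hF K hKG hK).and
      (Metric.tendstoUniformlyOn_iff.1 (hlim K hKG hK) (ε / 2) (half_pos hε))).exists
    have hle : F i x ≤ ψ x + ε / 2 := by
      refine hi.2 K subset_rfl hK _ (hψ.add continuousOn_const)
        (fun y hy => (hsuper y hy).add_const _) (fun y hy => ?_) x hx
      change F i y ≤ ψ y + ε / 2
      have := (abs_lt.1 (hclose y (hK.isClosed.frontier_subset hy))).1
      linarith [hfr y hy]
    have := (abs_lt.1 (hclose x hx)).2
    linarith

end IsPSubharmonicOn

end PSubharmonic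

section GaussianPerturbation

variable {E : Type*} [NormedAddCommGroup E] [InnerProductSpace ℝ E] {p : ℝ}

theorem pForm_add_smul_left (p t : ℝ) (g h : E) (B : E →L[ℝ] E) :
    pForm p (g + t • h) B = pForm p g B +
      t * (pForm p (g + h) B - pForm p g B - pForm p h B) + t ^ 2 * pForm p h B := by
  simp only [pForm, norm_add_sq_real, map_add, map_smul, inner_add_left, inner_add_right,
    inner_smul_left, inner_smul_right, norm_smul, mul_pow, Real.norm_eq_abs, sq_abs,
    Real.ringHom_apply]
  ring

theorem continuous_id_sub_rankOne_sub (c : ℝ) (y : E) :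
    Continuous fun x : E => ContinuousLinearMap.id ℝ E -
      c • InnerProductSpace.rankOne ℝ (x - y) (x - y) := by
  have hrank : Continuous fun x : E => InnerProductSpace.rankOne ℝ (x - y) (x - y) :=
    (InnerProductSpace.rankOne ℝ (E := E) (F := E)).continuous₂.comp
      ((continuous_sub_right y).prodMk (continuous_sub_right y))
  exact continuous_const.sub (hrank.const_smul c)

variable [FiniteDimensional ℝ E]

theorem continuous_pForm (p : ℝ) : Continuous fun z : E × (E →L[ℝ] E) => pForm p z.1 z.2 := by
  have htrace : Continuous fun B : E →L[ℝ] E => LinearMap.trace ℝ E (B : E →ₗ[ℝ] E) :=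
    ((LinearMap.trace ℝ E).comp (ContinuousLinearMap.coeLM ℝ)).continuous_of_finiteDimensional
  have hinner : Continuous fun z : E × (E →L[ℝ] E) => inner ℝ z.1 (z.2 z.1) :=
    continuous_fst.inner (continuous_snd.clm_apply continuous_fst)
  exact ((continuous_fst.norm.pow 2).mul (htrace.comp continuous_snd)).add
    (continuous_const.mul hinner)

theorem continuousAt_pForm {X : Type*} [TopologicalSpace X] {g : X → E} {B : X → E →L[ℝ] E} {a : X}
    (hg : ContinuousAt g a) (hB : ContinuousAt B a) (p : ℝ) :
    ContinuousAt (fun z => pForm p (g z) (B z)) a :=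
  ContinuousAt.comp (g := fun z : E × (E →L[ℝ] E) => pForm p z.1 z.2)
    (continuous_pForm p).continuousAt (hg.prodMk hB)

theorem pForm_rankOne_pos (hp : 1 < p) {g d : E} (hg : g ≠ 0) (hd : d ≠ 0) :
    0 < pForm p g (InnerProductSpace.rankOne ℝ d d) := by
  have hsq := sq_real_inner_le_norm_sq_mul_norm_sq g d
  have hpos : 0 < ‖g‖ ^ 2 * ‖d‖ ^ 2 := by positivity
  rw [pForm_rankOne]
  rcases le_total p 2 with h | h
  · nlinarith
  · nlinarith [sq_nonneg (inner ℝ g d)]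

theorem exists_add_pForm_gaussian_neg (hp : 1 < p) {g d : E} (hg : g ≠ 0) (hd : d ≠ 0) (c : ℝ) :
    ∃ α : ℝ, 0 < α ∧ c + pForm p g (ContinuousLinearMap.id ℝ E -
      (2 * α) • InnerProductSpace.rankOne ℝ d d) < 0 := by
  have hpos := pForm_rankOne_pos hp hg hd
  set P := pForm p g (InnerProductSpace.rankOne ℝ d d)
  set c' := c + pForm p g (ContinuousLinearMap.id ℝ E) with hc'
  refine ⟨(|c'| + 1) / P, by positivity, ?_⟩
  rw [pForm_sub, pForm_smul, ← add_sub_assoc, ← hc', mul_assoc, div_mul_cancel₀ _ hpos.ne']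
  linarith [le_abs_self c', abs_nonneg c']

theorem hasHessianAt_gaussian (α : ℝ) (x y : E) :
    HasHessianAt (fun z => Real.exp (-α * ‖z - y‖ ^ 2))
      ((-(2 * α * Real.exp (-α * ‖x - y‖ ^ 2))) • (x - y))
      ((-(2 * α * Real.exp (-α * ‖x - y‖ ^ 2))) • (ContinuousLinearMap.id ℝ E -
        (2 * α) • InnerProductSpace.rankOne ℝ (x - y) (x - y))) x := by
  have hexp : ∀ t : ℝ, HasDerivAt (fun t => Real.exp (-α * t)) (-α * Real.exp (-α * t)) t :=
    fun t => by simpa [mul_comm] using ((hasDerivAt_id t).const_mul (-α)).exp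
  convert hasHessianAt_comp_norm_sub_sq (c := y) (.of_forall hexp)
    ((hexp (‖x - y‖ ^ 2)).const_mul (-α)) using 1
  · congr 1
    ring
  · module

theorem HasHessianAt.sub_gaussian {f : E → ℝ} {g x : E} {B : E →L[ℝ] E}
    (h : HasHessianAt f g B x) (τ α : ℝ) (y : E) :
    HasHessianAt (fun z => f z - τ * Real.exp (-α * ‖z - y‖ ^ 2))
      (g + (2 * τ * α * Real.exp (-α * ‖x - y‖ ^ 2)) • (x - y))
      (B + (2 * τ * α * Real.exp (-α * ‖x - y‖ ^ 2)) • (ContinuousLinearMap.id ℝ E -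
        (2 * α) • InnerProductSpace.rankOne ℝ (x - y) (x - y))) x := by
  convert h.sub ((hasHessianAt_gaussian α x y).const_mul τ) using 1 <;> module

/-- Subtracting from `Φ` a sufficiently concentrated Gaussian centred anywhere off `x₀` makes it a
strict supersolution near `x₀`, however small the (positive) amplitude of the Gaussian. This is the
property of a supersolution that Hopf's boundary point argument uses. -/
def IsGaussianStableAt (p : ℝ) (Φ : E → ℝ) (x₀ : E) : Prop :=
  ∀ y ≠ x₀, ∃ α : ℝ, 0 < α ∧ ∀ᶠ z : ℝ × E in 𝓝[>] 0 ×ˢ 𝓝 x₀,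
    IsStrictSupersolutionAt p (fun x => Φ x - z.1 * Real.exp (-α * ‖x - y‖ ^ 2)) z.2

-- To first order in its amplitude, the Gaussian contributes `pForm p (∇Φ) (1 - 2 α d ⊗ d)`, which
-- tends to `-∞` as `α → ∞`, and a term which does not depend on `α`.
theorem isGaussianStableAt_of_pForm_nonpos (hp : 1 < p) {Φ : E → ℝ} {x₀ : E}
    (hΦ : ContDiffAt ℝ 2 Φ x₀) (hgrad : gradient Φ x₀ ≠ 0)
    (hsuper : ∀ᶠ x in 𝓝 x₀, pForm p (gradient Φ x) (hessian Φ x) ≤ 0) :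
    IsGaussianStableAt p Φ x₀ := by
  intro y hy
  set polar : E → ℝ := fun x => pForm p (gradient Φ x + (x - y)) (hessian Φ x) -
    pForm p (gradient Φ x) (hessian Φ x) - pForm p (x - y) (hessian Φ x)
  obtain ⟨α, hα, hneg⟩ := exists_add_pForm_gaussian_neg hp hgrad (sub_ne_zero.2 hy.symm) (polar x₀)
  refine ⟨α, hα, ?_⟩
  set γ : ℝ × E → ℝ := fun z => 2 * z.1 * α * Real.exp (-α * ‖z.2 - y‖ ^ 2) with hγ
  set C : E → E →L[ℝ] E := fun x => ContinuousLinearMap.id ℝ E -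
    (2 * α) • InnerProductSpace.rankOne ℝ (x - y) (x - y)
  have hCc : Continuous C := continuous_id_sub_rankOne_sub _ y
  have hγ₀ : γ (0, x₀) = 0 := by simp only [hγ, mul_zero, zero_mul]
  have hgΦ : ContinuousAt (fun z : ℝ × E => gradient Φ z.2) (0, x₀) :=
    ContinuousAt.comp (g := gradient Φ) (continuousAt_gradient (hΦ.of_le (by norm_num)))
      continuousAt_snd
  have hBΦ : ContinuousAt (fun z : ℝ × E => hessian Φ z.2) (0, x₀) :=
    ContinuousAt.comp (g := hessian Φ) (continuousAt_hessian hΦ) continuousAt_snd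
  have hd : ContinuousAt (fun z : ℝ × E => z.2 - y) (0, x₀) := by fun_prop
  have hγc : ContinuousAt γ (0, x₀) := by fun_prop
  have hg : ContinuousAt (fun z : ℝ × E => gradient Φ z.2 + γ z • (z.2 - y)) (0, x₀) := by fun_prop
  have hfirst : ContinuousAt (fun z : ℝ × E => polar z.2 +
      γ z * pForm p (z.2 - y) (hessian Φ z.2) +
      pForm p (gradient Φ z.2 + γ z • (z.2 - y)) (C z.2)) (0, x₀) :=
    ((((continuousAt_pForm (hgΦ.add hd) hBΦ p).sub (continuousAt_pForm hgΦ hBΦ p)).sub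
      (continuousAt_pForm hd hBΦ p)).add (hγc.mul (continuousAt_pForm hd hBΦ p))).add
        (continuousAt_pForm hg (hCc.continuousAt.comp continuousAt_snd) p)
  have hle : 𝓝[>] (0 : ℝ) ×ˢ 𝓝 x₀ ≤ 𝓝 (0, x₀) :=
    (Filter.prod_mono_left _ nhdsWithin_le_nhds).trans nhds_prod_eq.ge
  filter_upwards [hle (hfirst.tendsto.eventually_lt_const (u := 0)
      (by simpa only [hγ₀, zero_mul, add_zero, zero_smul] using hneg)),
    hle (hg.eventually_ne (y := 0) (by simpa only [hγ₀, zero_smul, add_zero] using hgrad)),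
    (hΦ.eventually (by simp)).prod_inr _, hsuper.prod_inr _,
    (eventually_mem_nhdsWithin (a := (0 : ℝ)) (s := Ioi 0)).prod_inl _]
    with z hfirst_neg hne hΦz hsz (hτ : 0 < z.1)
  have hγz : 0 < γ z := by positivity
  refine ⟨_, _, (hasHessianAt_hessian hΦz).sub_gaussian z.1 α y, hne, ?_⟩
  calc pForm p (gradient Φ z.2 + γ z • (z.2 - y)) (hessian Φ z.2 + γ z • C z.2)
      = pForm p (gradient Φ z.2) (hessian Φ z.2) + γ z * (polar z.2 +
          γ z * pForm p (z.2 - y) (hessian Φ z.2) +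
          pForm p (gradient Φ z.2 + γ z • (z.2 - y)) (C z.2)) := by
        rw [pForm_add, pForm_smul, pForm_add_smul_left]
        ring
    _ < 0 := add_neg_of_nonpos_of_neg hsz (mul_neg_of_pos_of_neg hγz hfirst_neg)

theorem isGaussianStableAt_const (hp : 1 < p) (c : ℝ) (x₀ : E) :
    IsGaussianStableAt p (fun _ => c) x₀ := by
  intro y hy
  have hd := sub_ne_zero.2 hy.symm
  obtain ⟨α, hα, hneg⟩ := exists_add_pForm_gaussian_neg hp hd hd 0
  rw [zero_add] at hneg
  have hdc : ContinuousAt (fun x : E => x - y) x₀ := by fun_prop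
  have hlt := (continuousAt_pForm hdc
    (continuous_id_sub_rankOne_sub (2 * α) y).continuousAt p).tendsto.eventually_lt_const hneg
  refine ⟨α, hα, ?_⟩
  filter_upwards [hlt.prod_inr _, (hdc.eventually_ne hd).prod_inr _,
    (eventually_mem_nhdsWithin (a := (0 : ℝ)) (s := Ioi 0)).prod_inl _]
    with z hz hdz (hτ : 0 < z.1)
  have hγ : 0 < 2 * z.1 * α * Real.exp (-α * ‖z.2 - y‖ ^ 2) := by positivity
  refine ⟨_, _, HasHessianAt.sub_gaussian (g := 0) (B := 0)
    ⟨0, .of_forall fun x => hasGradientAt_const x c, rfl, hasFDerivAt_const 0 z.2⟩ z.1 α y, ?_, ?_⟩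
  · rw [zero_add]
    exact smul_ne_zero hγ.ne' hdz
  · rw [zero_add, zero_add, pForm_smul, pForm_smul_left]
    exact mul_neg_of_pos_of_neg hγ (mul_neg_of_pos_of_neg (by positivity) hz)

end GaussianPerturbation

section StrongComparison

theorem exists_pos_add_le_of_isCompact {X : Type*} [TopologicalSpace X] {K : Set X}
    (hK : IsCompact K) {f g : X → ℝ} (hf : ContinuousOn f K) (hg : ContinuousOn g K)
    (hlt : ∀ x ∈ K, f x < g x) : ∃ δ : ℝ, 0 < δ ∧ ∀ x ∈ K, f x + δ ≤ g x := by
  obtain ⟨δ, hδ, hle⟩ := hK.exists_forall_le' (hg.sub hf) fun x hx => sub_pos.2 (hlt x hx)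
  exact ⟨δ, hδ, fun x hx => by linarith [show δ ≤ g x - f x from hle x hx]⟩

theorem exists_closedBall_inter_eq_singleton {E : Type*} [NormedAddCommGroup E]
    [InnerProductSpace ℝ E] {S : Set E} {y : E} (hS : IsCompact S) (hne : S.Nonempty)
    (hy : y ∉ S) : ∃ x₀ ∈ S, ∃ c ≠ x₀, closedBall c (dist x₀ c) ⊆ closedBall y (dist x₀ y) ∧
      closedBall c (dist x₀ c) ∩ S = {x₀} := by
  obtain ⟨x₀, hx₀, hmin⟩ := hS.exists_isMinOn hne (continuous_id.dist continuous_const).continuousOn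
    (f := fun x => dist x y)
  have hsub : closedBall (midpoint ℝ x₀ y) (dist x₀ (midpoint ℝ x₀ y)) ⊆
      closedBall y (dist x₀ y) := by
    refine closedBall_subset_closedBall' ?_
    rw [dist_left_midpoint, dist_midpoint_right, Real.norm_two]
    linarith
  refine ⟨x₀, hx₀, midpoint ℝ x₀ y, ?_, hsub, subset_antisymm ?_ ?_⟩
  · rw [Ne, midpoint_eq_left_iff]
    exact fun h => hy (h ▸ hx₀)
  · rintro z ⟨hz, hzS⟩
    have hfar : dist x₀ y ≤ dist z y := hmin hzS
    have hnear : dist z (midpoint ℝ x₀ y) ≤ dist x₀ y / 2 := by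
      rw [mem_closedBall, dist_left_midpoint, Real.norm_two] at hz
      linarith
    have hright : dist (midpoint ℝ x₀ y) y = dist x₀ y / 2 := by
      rw [dist_midpoint_right, Real.norm_two]
      ring
    have htri := dist_triangle z (midpoint ℝ x₀ y) y
    have hmid : midpoint ℝ x₀ y = midpoint ℝ z y :=
      eq_midpoint_of_dist_eq_half (by linarith) (by linarith)
    rw [midpoint_eq_midpoint_iff_vsub_eq_vsub, vsub_self, vsub_eq_zero_iff_eq] at hmid
    exact hmid.symm
  · exact singleton_subset_iff.2 ⟨mem_closedBall.2 le_rfl, hx₀⟩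

theorem lt_sub_gaussian_add_gaussian {E : Type*} [SeminormedAddCommGroup E]
    {α τ m a b : ℝ} {x₀ y z : E} (hα : 0 < α) (hτ : 0 < τ) (hτm : τ < m) (hab : a ≤ b)
    (hgap : dist z y ≤ dist x₀ y → a + m ≤ b) :
    a < b - τ * Real.exp (-α * ‖z - y‖ ^ 2) + τ * Real.exp (-α * ‖x₀ - y‖ ^ 2) := by
  rcases le_or_gt (dist z y) (dist x₀ y) with hzy | hzy
  · have hexp : Real.exp (-α * ‖z - y‖ ^ 2) ≤ 1 := by
      rw [Real.exp_le_one_iff, neg_mul]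
      exact neg_nonpos.2 (by positivity)
    have := Real.exp_pos (-α * ‖x₀ - y‖ ^ 2)
    nlinarith [hgap hzy]
  · rw [dist_eq_norm, dist_eq_norm] at hzy
    have hexp : Real.exp (-α * ‖z - y‖ ^ 2) < Real.exp (-α * ‖x₀ - y‖ ^ 2) := by
      rw [Real.exp_lt_exp, neg_mul, neg_mul, neg_lt_neg_iff]
      gcongr
    nlinarith

variable {E : Type*} [NormedAddCommGroup E] [InnerProductSpace ℝ E] [FiniteDimensional ℝ E]
  {p : ℝ} {f Φ : E → ℝ} {G : Set E} {x₀ y : E}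

theorem IsGaussianStableAt.exists_closedBall_subset (h : IsGaussianStableAt p Φ x₀) {V : Set E}
    (hV : V ∈ 𝓝 x₀) (hy : y ≠ x₀) : ∃ α : ℝ, 0 < α ∧ ∃ s : ℝ, 0 < s ∧ closedBall x₀ s ⊆ V ∧
      ∀ᶠ τ in 𝓝[>] 0, ∀ x ∈ closedBall x₀ s,
        IsStrictSupersolutionAt p (fun x => Φ x - τ * Real.exp (-α * ‖x - y‖ ^ 2)) x := by
  obtain ⟨α, hα, hev⟩ := h y hy
  obtain ⟨T, hT, W, hW, hsuper⟩ := eventually_prod_iff.1 hev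
  obtain ⟨s, hs, hsub⟩ := nhds_basis_closedBall.mem_iff.1 (inter_mem hW hV)
  exact ⟨α, hα, s, hs, hsub.trans inter_subset_right,
    hT.mono fun τ hτ x hx => hsuper hτ (hsub hx).1⟩

namespace IsPSubharmonicOn

-- Hopf's boundary point argument, at the boundary of the contact set `{f = Φ}`.
theorem lt_of_lt_on_closedBall (hf : IsPSubharmonicOn p f G) (hG : IsOpen G)
    (hΦ : ContinuousOn Φ G) (hle : ∀ x ∈ G, f x ≤ Φ x) (hx₀ : x₀ ∈ G)
    (hstable : IsGaussianStableAt p Φ x₀) (hy : y ≠ x₀)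
    (hlt : ∀ z ∈ closedBall y (dist x₀ y) ∩ G, z ≠ x₀ → f z < Φ z) : f x₀ < Φ x₀ := by
  refine (hle x₀ hx₀).lt_of_ne fun heq => ?_
  obtain ⟨α, hα, s, hs, hsG, hsuper⟩ := hstable.exists_closedBall_subset (hG.mem_nhds hx₀) hy
  have hsphere : sphere x₀ s ⊆ G := sphere_subset_closedBall.trans hsG
  obtain ⟨m, hm, hgap⟩ : ∃ m : ℝ, 0 < m ∧
      ∀ z ∈ sphere x₀ s ∩ closedBall y (dist x₀ y), f z + m ≤ Φ z := by
    refine exists_pos_add_le_of_isCompact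
      ((isCompact_sphere x₀ s).inter_right isClosed_closedBall)
      (hf.1.mono (inter_subset_left.trans hsphere)) (hΦ.mono (inter_subset_left.trans hsphere))
      fun z hz => hlt z ⟨hz.2, hsphere hz.1⟩ ?_
    rintro rfl
    exact hs.ne (by simpa using hz.1)
  obtain ⟨τ, hτψ, hτm, hτ : 0 < τ⟩ := (hsuper.and (((eventually_lt_nhds hm).filter_mono
    nhdsWithin_le_nhds).and self_mem_nhdsWithin)).exists
  set ψ : E → ℝ := fun x => Φ x - τ * Real.exp (-α * ‖x - y‖ ^ 2) +
    τ * Real.exp (-α * ‖x₀ - y‖ ^ 2) with hψ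
  have hψc : ContinuousOn ψ (closedBall x₀ s) :=
    ((hΦ.mono hsG).sub (by fun_prop)).add continuousOn_const
  have hlt_ψ : ∀ z ∈ sphere x₀ s, f z < ψ z := fun z hz =>
    lt_sub_gaussian_add_gaussian hα hτ hτm (hle z (hsphere hz)) fun hzy => hgap z ⟨hz, hzy⟩
  obtain ⟨δ, hδ, hδle⟩ := exists_pos_add_le_of_isCompact (isCompact_sphere x₀ s)
    (hf.1.mono hsphere) (hψc.mono sphere_subset_closedBall) hlt_ψ
  have hcomp : f x₀ ≤ ψ x₀ + -δ := by
    refine hf.2 _ hsG (isCompact_closedBall x₀ s) (fun x => ψ x + -δ) (hψc.add continuousOn_const)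
      (fun x hx => ?_) (fun x hx => ?_) x₀ (mem_closedBall_self hs.le)
    · exact ((hτψ x (interior_subset hx)).add_const _).add_const _
    · have := hδle x (frontier_closedBall_subset_sphere hx)
      linarith
  simp only [hψ] at hcomp
  linarith

theorem eventuallyEq_of_eq (hf : IsPSubharmonicOn p f G) (hG : IsOpen G)
    (hΦ : ContinuousOn Φ G) (hle : ∀ x ∈ G, f x ≤ Φ x)
    (hstable : ∀ x ∈ G, IsGaussianStableAt p Φ x) {a : E} (ha : a ∈ G) (heq : f a = Φ a) :
    f =ᶠ[𝓝 a] Φ := by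
  obtain ⟨r, hr, hball⟩ := Metric.isOpen_iff.1 hG a ha
  filter_upwards [ball_mem_nhds a (half_pos hr)] with y hy
  by_contra hne
  have hsub : closedBall y (dist a y) ⊆ G := by
    refine (closedBall_subset_ball' ?_).trans hball
    rw [dist_comm a y]
    linarith [mem_ball.1 hy]
  have hS : IsCompact (closedBall y (dist a y) ∩ {x | f x - Φ x = 0}) :=
    (isCompact_closedBall y _).of_isClosed_subset
      (((hf.1.sub hΦ).mono hsub).preimage_isClosed_of_isClosed isClosed_closedBall
        isClosed_singleton) inter_subset_left
  obtain ⟨x₀, hx₀, c, hc, hcsub, hsing⟩ := exists_closedBall_inter_eq_singleton hS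
    ⟨a, mem_closedBall.2 le_rfl, sub_eq_zero.2 heq⟩ fun hy => hne (sub_eq_zero.1 hy.2)
  have hcsub' := hcsub.trans (closedBall_subset_closedBall hx₀.1)
  refine (hf.lt_of_lt_on_closedBall hG hΦ hle (hsub hx₀.1) (hstable _ (hsub hx₀.1)) hc
    fun z hz hzx => (hle z hz.2).lt_of_ne fun hzeq => hzx ?_).ne (sub_eq_zero.1 hx₀.2)
  have : z ∈ ({x₀} : Set E) := hsing ▸ ⟨hz.1, hcsub' hz.1, sub_eq_zero.2 hzeq⟩
  exact this

theorem eqOn_of_eq (hf : IsPSubharmonicOn p f G) (hG : IsOpen G) (hconn : IsPreconnected G)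
    (hΦ : ContinuousOn Φ G) (hle : ∀ x ∈ G, f x ≤ Φ x)
    (hstable : ∀ x ∈ G, IsGaussianStableAt p Φ x) {a : E} (ha : a ∈ G) (heq : f a = Φ a) :
    EqOn f Φ G := by
  have hopen : IsOpen {x | f =ᶠ[𝓝 x] Φ} := isOpen_setOfPred_eventually_nhds
  have hsub : G ⊆ {x | f =ᶠ[𝓝 x] Φ} := by
    refine hconn.subset_of_closure_inter_subset hopen
      ⟨a, ha, hf.eventuallyEq_of_eq hG hΦ hle hstable ha heq⟩ fun x ⟨hx, hxG⟩ => ?_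
    refine hf.eventuallyEq_of_eq hG hΦ hle hstable hxG ?_
    have hfreq : ∃ᶠ y in 𝓝 x, f y = Φ y :=
      (mem_closure_iff_frequently.1 hx).mono fun y hy => hy.self_of_nhds
    exact tendsto_nhds_unique_of_frequently_eq (hf.1.continuousAt (hG.mem_nhds hxG))
      (hΦ.continuousAt (hG.mem_nhds hxG)) hfreq
  exact fun x hx => (hsub hx).self_of_nhds

end IsPSubharmonicOn

end StrongComparison

section FundamentalSolution

/-- The exponent `(N - 1) / (p - 1)` of the decay `|∇μ_p(x)| = |x| ^ (-(N - 1) / (p - 1))`. -/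
noncomputable def mupGradientExponent (N : ℕ) (p : ℝ) : ℝ := (N - 1) / (p - 1)

/-- The fundamental solution `μ_p(x)` as a function of `t = |x|²`, which is smooth in `x`. -/
noncomputable def mupProfile (N : ℕ) (p t : ℝ) : ℝ :=
  if p < N then (p - 1) / (N - p) * t ^ ((p - N) / (2 * (p - 1))) else -Real.log t / 2

variable {N : ℕ} {p : ℝ} {x y : EuclideanSpace ℝ (Fin N)}

theorem one_add_mupGradientExponent_mul (hp : 1 < p) :
    (1 + mupGradientExponent N p) * (p - 1) = N + p - 2 := by
  rw [mupGradientExponent, add_mul, div_mul_cancel₀ _ (by linarith)]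
  ring

theorem mup_eq_mupProfile (hp : 1 < p) (x : EuclideanSpace ℝ (Fin N)) :
    mup N p x = mupProfile N p (‖x‖ ^ 2) := by
  rw [mup, mupProfile]
  split_ifs
  · rw [← Real.rpow_natCast, ← Real.rpow_mul (norm_nonneg x)]
    congr 2
    have : p - 1 ≠ 0 := by linarith
    push_cast
    field_simp
  · rw [Real.log_pow]
    push_cast
    ring

theorem hasDerivAt_mupProfile (hp : 1 < p) (hpN : p ≤ N) {t : ℝ} (ht : 0 < t) :
    HasDerivAt (mupProfile N p) (-(1 / 2) * t ^ (-(1 + mupGradientExponent N p) / 2)) t := by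
  have hp1 : p - 1 ≠ 0 := by linarith
  unfold mupProfile
  split_ifs with h
  · have hNp : (N : ℝ) - p ≠ 0 := by linarith
    refine ((Real.hasDerivAt_rpow_const (Or.inl ht.ne')).const_mul _).congr_deriv ?_
    have hexp : (p - (N : ℝ)) / (2 * (p - 1)) - 1 = -(1 + mupGradientExponent N p) / 2 := by
      rw [mupGradientExponent]
      field_simp
      ring
    rw [hexp, ← mul_assoc]
    congr 1
    field_simp
    ring
  · have hexp : -(1 + mupGradientExponent N p) / 2 = -1 := by
      rw [mupGradientExponent, ← le_antisymm hpN (not_lt.1 h), div_self hp1]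
      norm_num
    rw [hexp, Real.rpow_neg_one]
    exact ((Real.hasDerivAt_log ht.ne').fun_neg.div_const 2).congr_deriv (by ring)

theorem hasHessianAt_mup (hp : 1 < p) (hpN : p ≤ N) (hx : x ≠ 0) :
    HasHessianAt (mup N p) (-(‖x‖ ^ 2) ^ (-(1 + mupGradientExponent N p) / 2) • x)
      (-(‖x‖ ^ 2) ^ (-(1 + mupGradientExponent N p) / 2) • (ContinuousLinearMap.id ℝ _ -
        ((1 + mupGradientExponent N p) / ‖x‖ ^ 2) • InnerProductSpace.rankOne ℝ x x)) x := by
  have hx' : 0 < ‖x - 0‖ ^ 2 := by rw [sub_zero]; positivity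
  have hradial := hasHessianAt_comp_norm_sub_sq (c := 0)
    ((eventually_gt_nhds hx').mono fun t ht => hasDerivAt_mupProfile hp hpN ht)
    ((Real.hasDerivAt_rpow_const (.inl hx'.ne')).const_mul (-(1 / 2)))
  simp only [sub_zero, ← mup_eq_mupProfile hp, Real.rpow_sub_one (sub_zero x ▸ hx'.ne')] at hradial
  convert hradial using 1 <;> module

theorem pForm_id_sub_rankOne_eq_zero (hp : 1 < p) (x : EuclideanSpace ℝ (Fin N)) :
    pForm p x (ContinuousLinearMap.id ℝ _ -
      ((1 + mupGradientExponent N p) / ‖x‖ ^ 2) • InnerProductSpace.rankOne ℝ x x) = 0 := by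
  rcases eq_or_ne x 0 with rfl | _
  · simp [pForm]
  rw [pForm_sub, pForm_smul, pForm_id, pForm_rankOne, finrank_euclideanSpace_fin,
    real_inner_self_eq_norm_sq, ← one_add_mupGradientExponent_mul hp]
  field_simp
  ring

theorem HasHessianAt.hessian_eq {E : Type*} [NormedAddCommGroup E] [InnerProductSpace ℝ E]
    [CompleteSpace E] {f : E → ℝ} {g x : E} {B : E →L[ℝ] E} (h : HasHessianAt f g B x) :
    hessian f x = B := by
  obtain ⟨G, hG, -, hB⟩ := h
  exact (hB.congr_of_eventuallyEq (hG.mono fun y hy => hy.gradient)).fderiv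

theorem contDiffAt_mup (hx : x ≠ 0) : ContDiffAt ℝ 2 (mup N p) x := by
  have hnorm : ContDiffAt ℝ 2 (fun y : EuclideanSpace ℝ (Fin N) => ‖y‖) x := contDiffAt_norm ℝ hx
  unfold mup
  split_ifs
  · exact contDiffAt_const.mul (hnorm.rpow_const_of_ne (norm_ne_zero_iff.2 hx))
  · exact (hnorm.log (norm_ne_zero_iff.2 hx)).neg

theorem continuousOn_mup : ContinuousOn (mup N p) {0}ᶜ :=
  fun _ hx => (contDiffAt_mup hx).continuousAt.continuousWithinAt

theorem isGaussianStableAt_const_mul_mup (hp : 1 < p) (hpN : p ≤ N) {c : ℝ} (hc : c ≠ 0)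
    (hx : x ≠ 0) : IsGaussianStableAt p (fun y => c * mup N p y) x := by
  have hT : ∀ y : EuclideanSpace ℝ (Fin N), y ≠ 0 →
      -(‖y‖ ^ 2) ^ (-(1 + mupGradientExponent N p) / 2) ≠ 0 := fun y hy =>
    neg_ne_zero.2 (by positivity)
  refine isGaussianStableAt_of_pForm_nonpos hp (contDiffAt_const.mul (contDiffAt_mup hx)) ?_ ?_
  · rw [((hasHessianAt_mup hp hpN hx).const_mul c).hasGradientAt.gradient]
    exact smul_ne_zero hc (smul_ne_zero (hT x hx) hx)
  · filter_upwards [isOpen_compl_singleton.mem_nhds hx] with y hy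
    have h := (hasHessianAt_mup hp hpN hy).const_mul c
    rw [h.hasGradientAt.gradient, h.hessian_eq]
    simp only [pForm_smul, pForm_smul_left, pForm_id_sub_rankOne_eq_zero hp, mul_zero, le_refl]

theorem isStrictSupersolutionAt_mul_mup_sub (hp : 1 < p) (hpN : p ≤ N) {c ε : ℝ} (hc : 0 ≤ c)
    (hε : 0 < ε) (hx : x ≠ 0) :
    IsStrictSupersolutionAt p (fun y => c * mup N p y - ε * ‖y‖ ^ 2) x := by
  have h := ((hasHessianAt_mup hp hpN hx).const_mul c).sub
    ((hasHessianAt_norm_sub_sq 0 x).const_mul ε)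
  simp only [sub_zero] at h
  set T := (‖x‖ ^ 2) ^ (-(1 + mupGradientExponent N p) / 2)
  have : 0 ≤ T := by positivity
  have hgrad : c • -T • x - ε • (2 : ℝ) • x = -(c * T + 2 * ε) • x := by module
  have hcoef : -(c * T + 2 * ε) ≠ 0 := by
    have : 0 < c * T + 2 * ε := by positivity
    linarith
  refine ⟨_, _, h, hgrad ▸ smul_ne_zero hcoef hx, ?_⟩
  have hNp : 0 < (N : ℝ) + p - 2 := by linarith
  have : 0 < (-(c * T + 2 * ε)) ^ 2 := by positivity
  rw [hgrad, pForm_smul_left, pForm_sub, pForm_smul, pForm_smul, pForm_id_sub_rankOne_eq_zero hp,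
    pForm_smul, pForm_smul, pForm_id, finrank_euclideanSpace_fin, mul_zero, mul_zero, zero_sub,
    mul_neg]
  exact neg_neg_of_pos (by positivity)

theorem frontier_closedBall_diff_ball_subset {E : Type*} [PseudoMetricSpace E] (x : E) (r R : ℝ) :
    frontier (closedBall x R \ ball x r) ⊆ sphere x r ∪ sphere x R := by
  rw [sdiff_eq]
  refine (frontier_inter_subset _ _).trans ?_
  rw [frontier_compl, union_comm]
  exact union_subset_union (inter_subset_right.trans frontier_ball_subset_sphere)
    (inter_subset_left.trans frontier_closedBall_subset_sphere)

theorem IsPSubharmonicOn.le_mul_mup_add {f : EuclideanSpace ℝ (Fin N) → ℝ}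
    {G : Set (EuclideanSpace ℝ (Fin N))} (hf : IsPSubharmonicOn p f G) (hp : 1 < p) (hpN : p ≤ N)
    {r₁ r₂ c A : ℝ} (hr₁ : 0 < r₁) (hG : closedBall 0 r₂ \ ball 0 r₁ ⊆ G) (hc : 0 ≤ c)
    (h₁ : ∀ y, ‖y‖ = r₁ → f y ≤ c * mup N p y + A) (h₂ : ∀ y, ‖y‖ = r₂ → f y ≤ c * mup N p y + A)
    (hx₁ : r₁ ≤ ‖x‖) (hx₂ : ‖x‖ ≤ r₂) : f x ≤ c * mup N p x + A := by
  set K : Set (EuclideanSpace ℝ (Fin N)) := closedBall 0 r₂ \ ball 0 r₁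
  have hK : IsCompact K := (isCompact_closedBall 0 r₂).diff isOpen_ball
  have hK₀ : K ⊆ {0}ᶜ := fun _ hy => (ne_of_mem_of_not_mem (mem_ball_self hr₁) hy.2).symm
  refine le_of_forall_pos_le_add fun δ hδ => ?_
  have hr₂ : 0 < r₂ := hr₁.trans_le (hx₁.trans hx₂)
  have hcomp : f x ≤ c * mup N p x - δ / r₂ ^ 2 * ‖x‖ ^ 2 + (A + δ) := by
    refine hf.2 K hG hK (fun y => c * mup N p y - δ / r₂ ^ 2 * ‖y‖ ^ 2 + (A + δ)) ?_
      (fun y hy => ?_) (fun y hy => ?_) x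
      ⟨mem_closedBall_zero_iff.2 hx₂, by simpa using hx₁⟩
    · have := (continuousOn_mup (p := p)).mono hK₀
      fun_prop
    · exact (isStrictSupersolutionAt_mul_mup_sub hp hpN hc (by positivity)
        (hK₀ (interior_subset hy))).add_const _
    · have hle : f y ≤ c * mup N p y + A :=
        (frontier_closedBall_diff_ball_subset _ _ _ hy).elim
          (fun h => h₁ y (mem_sphere_zero_iff_norm.1 h))
          (fun h => h₂ y (mem_sphere_zero_iff_norm.1 h))
      have hy₂ : ‖y‖ ≤ r₂ := mem_closedBall_zero_iff.1 (hK.isClosed.frontier_subset hy).1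
      have : δ / r₂ ^ 2 * ‖y‖ ^ 2 ≤ δ := by
        rw [div_mul_eq_mul_div, div_le_iff₀ (by positivity)]
        gcongr
      linarith
  have : 0 ≤ δ / r₂ ^ 2 * ‖x‖ ^ 2 := by positivity
  linarith

end FundamentalSolution

section Asymptotics

variable {N : ℕ} {p : ℝ}

theorem tendsto_mup_atTop (hp : 1 < p) : Tendsto (mup N p) (𝓝[≠] 0) atTop := by
  have hnorm : Tendsto (fun x : EuclideanSpace ℝ (Fin N) => ‖x‖) (𝓝[≠] 0) (𝓝[>] 0) :=
    tendsto_norm_nhdsNE_zero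
  unfold mup
  split_ifs with h
  · have hexp : (p - (N : ℝ)) / (p - 1) < 0 := div_neg_of_neg_of_pos (by linarith) (by linarith)
    have hcoef : 0 < (p - 1) / ((N : ℝ) - p) := div_pos (by linarith) (by linarith)
    exact ((tendsto_rpow_neg_nhdsGT_zero hexp).comp hnorm).const_mul_atTop hcoef
  · exact tendsto_neg_atBot_atTop.comp (Real.tendsto_log_nhdsGT_zero.comp hnorm)

theorem mup_congr {x y : EuclideanSpace ℝ (Fin N)} (h : ‖x‖ = ‖y‖) : mup N p x = mup N p y := by
  rw [mup, mup, h]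

theorem tendsto_mup_norm_smul_div_mup (hp : 1 < p) (hpN : p ≤ N) {y : EuclideanSpace ℝ (Fin N)}
    (hy : y ≠ 0) :
    Tendsto (fun x : EuclideanSpace ℝ (Fin N) => mup N p (‖x‖ • y) / mup N p x) (𝓝[≠] 0)
      (𝓝 (‖y‖ ^ ((p - N) / (p - 1)))) := by
  have hyn : 0 < ‖y‖ := norm_pos_iff.2 hy
  have hpos : ∀ᶠ x in 𝓝[≠] (0 : EuclideanSpace ℝ (Fin N)), 0 < mup N p x :=
    (tendsto_mup_atTop hp).eventually_gt_atTop 0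
  rcases hpN.lt_or_eq with h | h
  · refine tendsto_const_nhds.congr' ?_
    filter_upwards [hpos] with x hx
    rw [eq_div_iff hx.ne', mup, mup, if_pos h, if_pos h, norm_smul, norm_norm,
      Real.mul_rpow (norm_nonneg x) hyn.le]
    ring
  · rw [← h, sub_self, zero_div, Real.rpow_zero]
    have hlim : Tendsto (fun x : EuclideanSpace ℝ (Fin N) => 1 + -Real.log ‖y‖ / mup N p x)
        (𝓝[≠] 0) (𝓝 1) := by
      simpa using ((tendsto_mup_atTop hp).const_div_atTop (-Real.log ‖y‖)).const_add 1
    refine hlim.congr' ?_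
    filter_upwards [hpos, self_mem_nhdsWithin] with x hx hx0
    rw [eq_div_iff hx.ne', add_mul, div_mul_cancel₀ _ hx.ne', mup, mup, if_neg h.not_lt,
      if_neg h.not_lt, norm_smul, norm_norm, Real.log_mul (norm_ne_zero_iff.2 hx0) hyn.ne']
    ring

theorem eventually_norm_mul_lt {E : Type*} [NormedAddCommGroup E] (c : ℝ) {ε : ℝ} (hε : 0 < ε) :
    ∀ᶠ x in 𝓝[≠] (0 : E), ‖x‖ * c < ε := by
  have hcont : Continuous fun x : E => ‖x‖ * c := by fun_prop
  exact ((hcont.tendsto 0).mono_left nhdsWithin_le_nhds).eventually_lt_const (by simpa using hε)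

/-- The constants `c ≥ 0` for which `f ≤ c μ_p` on arbitrarily small spheres about the origin. For a
strong solution their infimum is the limit of `u / μ_p`. -/
def sphereMajorants {N : ℕ} (p : ℝ) (f : EuclideanSpace ℝ (Fin N) → ℝ) : Set ℝ :=
  {c | 0 ≤ c ∧ ∃ᶠ x in 𝓝[≠] (0 : EuclideanSpace ℝ (Fin N)),
    ∀ y, ‖y‖ = ‖x‖ → f y ≤ c * mup N p y}

variable {q R : ℝ} {G : Set (EuclideanSpace ℝ (Fin N))} {f u : EuclideanSpace ℝ (Fin N) → ℝ}

theorem bddBelow_sphereMajorants : BddBelow (sphereMajorants p f) := ⟨0, fun _ hc => hc.1⟩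

theorem eventually_exists_mul_mup_lt {c : ℝ} (hc₀ : 0 ≤ c) (hc : c < sInf (sphereMajorants p f)) :
    ∀ᶠ x in 𝓝[≠] (0 : EuclideanSpace ℝ (Fin N)), ∃ y, ‖y‖ = ‖x‖ ∧ c * mup N p y < f y := by
  have hmem : c ∉ sphereMajorants p f := notMem_of_lt_csInf hc bddBelow_sphereMajorants
  simpa [sphereMajorants, hc₀] using hmem

theorem IsStrongSolution.sphereMajorants_nonempty (hu : IsStrongSolution p q G u) (hG : IsOpen G)
    (hN : 2 ≤ N) (hp : 1 < p) (hq : p - 1 < q) (hpos : ∀ x ∈ G, 0 ≤ u x) (hR₀ : 0 < R)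
    (hR : closedBall 0 R \ {0} ⊆ G) {m : ℝ}
    (hm : ∃ᶠ x in 𝓝[≠] (0 : EuclideanSpace ℝ (Fin N)), u x / mup N p x ≤ m) :
    (sphereMajorants p u).Nonempty := by
  set C := Real.exp (16 * gradientConst N p (q - p + 1))
  have : 0 < C := Real.exp_pos _
  refine ⟨C * |m|, by positivity, ?_⟩
  refine (hm.and_eventually (((tendsto_mup_atTop hp).eventually_gt_atTop 0).and
    ((eventually_norm_mul_lt 1 (half_pos hR₀)).and self_mem_nhdsWithin))).mono ?_
  rintro x ⟨hx, hμ, hxR, hx0⟩ y hy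
  rw [mul_one] at hxR
  rw [div_le_iff₀ hμ] at hx
  calc u y ≤ C * u x := hu.sphere_harnack hG hN hp hq hpos hR hx0 hxR.le hy
    _ ≤ C * (|m| * mup N p x) := by gcongr; exact hx.trans (by gcongr; exact le_abs_self m)
    _ = C * |m| * mup N p y := by rw [mup_congr hy, mul_assoc]

theorem IsPSubharmonicOn.exists_le_mul_mup_add (hf : IsPSubharmonicOn p f G) (hp : 1 < p)
    (hpN : p ≤ N) (hR₀ : 0 < R) (hR : closedBall 0 R \ {0} ⊆ G) {c : ℝ}
    (hc : c ∈ sphereMajorants p f) :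
    ∃ A, ∀ x ≠ 0, ‖x‖ ≤ R → f x ≤ c * mup N p x + A := by
  have hsphere : sphere (0 : EuclideanSpace ℝ (Fin N)) R ⊆ {0}ᶜ :=
    fun _ hx => ne_of_mem_sphere hx hR₀.ne'
  obtain ⟨A, hA⟩ : BddAbove ((fun x => f x - c * mup N p x) '' sphere 0 R) :=
    (isCompact_sphere 0 R).bddAbove_image ((hf.1.mono fun x hx => hR
      ⟨sphere_subset_closedBall hx, hsphere hx⟩).sub
        (continuousOn_const.mul (continuousOn_mup.mono hsphere)))
  refine ⟨max A 0, fun x hx hxR => ?_⟩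
  obtain ⟨z, hz, hzx, hz0⟩ := (hc.2.and_eventually
    ((eventually_norm_mul_lt 1 (norm_pos_iff.2 hx)).and self_mem_nhdsWithin)).exists
  rw [mul_one] at hzx
  refine hf.le_mul_mup_add hp hpN (norm_pos_iff.2 hz0) ?_ hc.1 (fun y hy => ?_) (fun y hy => ?_)
    hzx.le hxR
  · exact (sdiff_subset_sdiff_right (singleton_subset_iff.2
      (mem_ball_self (norm_pos_iff.2 hz0)))).trans hR
  · linarith [hz y hy, le_max_right A 0]
  · have := hA (mem_image_of_mem _ (mem_sphere_zero_iff_norm.2 hy))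
    linarith [le_max_left A 0]

theorem IsPSubharmonicOn.eventually_le_mul_mup (hf : IsPSubharmonicOn p f G) (hp : 1 < p)
    (hpN : p ≤ N) (hR₀ : 0 < R) (hR : closedBall 0 R \ {0} ⊆ G)
    (hne : (sphereMajorants p f).Nonempty) {c : ℝ} (hc : sInf (sphereMajorants p f) < c) :
    ∀ᶠ x in 𝓝[≠] 0, f x ≤ c * mup N p x := by
  obtain ⟨c', hc', hlt⟩ := exists_lt_of_csInf_lt hne hc
  obtain ⟨A, hA⟩ := hf.exists_le_mul_mup_add hp hpN hR₀ hR hc'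
  filter_upwards [(tendsto_mup_atTop hp).eventually_ge_atTop (A / (c - c')),
    eventually_norm_mul_lt 1 hR₀, self_mem_nhdsWithin] with x hμ hxR hx0
  rw [mul_one] at hxR
  rw [div_le_iff₀ (by linarith)] at hμ
  linarith [hA x hx0 hxR.le]

end Asymptotics

section LocallyUniformLimits

variable {ι X Y : Type*} [TopologicalSpace X] [PseudoMetricSpace Y]

theorem tendstoLocallyUniformlyOn_of_eventually_equicontinuous {l : Filter ι} [l.NeBot]
    {F : ι → X → Y} {f : X → Y} {s : Set X} (hlim : ∀ x ∈ s, Tendsto (F · x) l (𝓝 (f x)))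
    (hequi : ∀ x ∈ s, ∀ ε > 0, ∃ V ∈ 𝓝 x, ∀ᶠ i in l, ∀ y ∈ V, dist (F i y) (F i x) ≤ ε) :
    TendstoLocallyUniformlyOn F f l s := by
  refine Metric.tendstoLocallyUniformlyOn_iff.2 fun ε hε x hx => ?_
  obtain ⟨V, hV, hF⟩ := hequi x hx (ε / 3) (by positivity)
  refine ⟨V ∩ s, inter_mem (mem_nhdsWithin_of_mem_nhds hV) self_mem_nhdsWithin, ?_⟩
  filter_upwards [hF, (Metric.tendsto_nhds.1 (hlim x hx)) (ε / 3) (by positivity)]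
    with i hi hix y hy
  have hfy : dist (f y) (f x) ≤ ε / 3 :=
    le_of_tendsto ((hlim y hy.2).dist (hlim x hx)) (hF.mono fun j hj => hj y hy.1)
  calc dist (f y) (F i y) ≤ dist (f y) (f x) + dist (f x) (F i x) + dist (F i x) (F i y) :=
        dist_triangle4 _ _ _ _
    _ = dist (f y) (f x) + dist (F i x) (f x) + dist (F i y) (F i x) := by
        rw [dist_comm (f x), dist_comm (F i x) (F i y)]
    _ < ε := by linarith [hi y hy.1]

end LocallyUniformLimits

section BlowUp

variable {N : ℕ} {p q R k : ℝ} {G : Set (EuclideanSpace ℝ (Fin N))}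
  {f u w : EuclideanSpace ℝ (Fin N) → ℝ} {ξ y : EuclideanSpace ℝ (Fin N)}

/-- The blow-up of `f` at the scale `‖x‖`, in units of `μ_p(x)`. -/
noncomputable def rescale (p : ℝ) (f : EuclideanSpace ℝ (Fin N) → ℝ)
    (x y : EuclideanSpace ℝ (Fin N)) : ℝ :=
  (mup N p x)⁻¹ * f (‖x‖ • y)

theorem eventually_mup_pos (hp : 1 < p) : ∀ᶠ x in 𝓝[≠] 0, 0 < mup N p x :=
  (tendsto_mup_atTop hp).eventually_gt_atTop 0

theorem tendsto_norm_smul_nhdsNE (hy : y ≠ 0) :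
    Tendsto (fun x : EuclideanSpace ℝ (Fin N) => ‖x‖ • y) (𝓝[≠] 0) (𝓝[≠] 0) := by
  have hcont : Continuous fun x : EuclideanSpace ℝ (Fin N) => ‖x‖ • y := by fun_prop
  have hlim : Tendsto (fun x : EuclideanSpace ℝ (Fin N) => ‖x‖ • y) (𝓝[≠] 0) (𝓝 0) := by
    simpa using (hcont.tendsto 0).mono_left nhdsWithin_le_nhds
  refine tendsto_nhdsWithin_iff.2 ⟨hlim, ?_⟩
  filter_upwards [self_mem_nhdsWithin] with x hx using smul_ne_zero (norm_ne_zero_iff.2 hx) hy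

theorem closedBall_diff_mem_nhdsNE (hR₀ : 0 < R) (hR : closedBall 0 R \ {0} ⊆ G) : G ∈ 𝓝[≠] 0 :=
  mem_of_superset (sdiff_mem_nhdsWithin_compl (closedBall_mem_nhds 0 hR₀) {0}) hR

theorem IsPSubharmonicOn.eventually_rescale (hf : IsPSubharmonicOn p f G) (hp : 1 < p)
    (hR₀ : 0 < R) (hR : closedBall 0 R \ {0} ⊆ G) {K : Set (EuclideanSpace ℝ (Fin N))}
    (hK : IsCompact K) (hK₀ : K ⊆ {0}ᶜ) :
    ∀ᶠ x in 𝓝[≠] 0, IsPSubharmonicOn p (rescale p f x) K := by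
  obtain ⟨C, hC⟩ := hK.isBounded.exists_norm_le
  filter_upwards [eventually_mup_pos hp, eventually_norm_mul_lt C hR₀, self_mem_nhdsWithin]
    with x hμ hx hx₀
  have hx₀ : ‖x‖ ≠ 0 := norm_ne_zero_iff.2 hx₀
  refine (hf.const_mul_comp_smul (inv_pos.2 hμ) hx₀).mono fun y hy =>
    hR ⟨mem_closedBall_zero_iff.2 ?_, smul_ne_zero hx₀ (hK₀ hy)⟩
  rw [norm_smul, norm_norm]
  exact (mul_le_mul_of_nonneg_left (hC y hy) (norm_nonneg x)).trans hx.le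

theorem IsStrongSolution.le_exp_mul_of_mem_closedBall (hu : IsStrongSolution p q G u)
    (hG : IsOpen G) (hp : 1 < p) (hq : p - 1 < q) (hpos : ∀ x ∈ G, 0 ≤ u x)
    (hR : closedBall 0 R \ {0} ⊆ G) (hξ : ξ ≠ 0) (hξR : ‖ξ‖ * 3 ≤ R)
    {a b : EuclideanSpace ℝ (Fin N)} (ha : a ∈ closedBall ξ (‖ξ‖ / 2))
    (hb : b ∈ closedBall ξ (‖ξ‖ / 2)) :
    u b ≤ Real.exp (4 * gradientConst N p (q - p + 1) / ‖ξ‖ * ‖b - a‖) * u a := by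
  have hseg : ∀ z ∈ segment ℝ a b, ‖ξ‖ / 2 ≤ ‖z‖ ∧ ‖z‖ ≤ R / 2 := by
    intro z hz
    have hzξ : ‖z - ξ‖ ≤ ‖ξ‖ / 2 :=
      mem_closedBall_iff_norm.1 ((convex_closedBall ξ _).segment_subset ha hb hz)
    constructor <;> linarith [norm_le_norm_add_norm_sub' ξ z, norm_sub_rev z ξ,
      norm_le_norm_add_norm_sub' z ξ]
  have hconst : 4 * gradientConst N p (q - p + 1) / ‖ξ‖ =
      2 * gradientConst N p (q - p + 1) / (‖ξ‖ / 2) := by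
    ring
  rw [hconst]
  exact hu.le_exp_mul_of_segment hG hp hq hpos hR (half_pos (norm_pos_iff.2 hξ)) hseg

theorem IsStrongSolution.eventually_rescale_le_exp_mul (hu : IsStrongSolution p q G u)
    (hG : IsOpen G) (hp : 1 < p) (hq : p - 1 < q) (hpos : ∀ x ∈ G, 0 ≤ u x) (hR₀ : 0 < R)
    (hR : closedBall 0 R \ {0} ⊆ G) (hξ : ξ ≠ 0) :
    ∀ᶠ x in 𝓝[≠] 0, ∀ a ∈ closedBall ξ (‖ξ‖ / 2), ∀ b ∈ closedBall ξ (‖ξ‖ / 2),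
      rescale p u x b ≤
        Real.exp (4 * gradientConst N p (q - p + 1) / ‖ξ‖ * ‖b - a‖) * rescale p u x a := by
  filter_upwards [eventually_mup_pos hp, eventually_norm_mul_lt (‖ξ‖ * 3) hR₀,
    self_mem_nhdsWithin] with x hμ hx hx₀ a ha b hb
  have hx₀ : ‖x‖ ≠ 0 := norm_ne_zero_iff.2 hx₀
  have hmem : ∀ z ∈ closedBall ξ (‖ξ‖ / 2),
      ‖x‖ • z ∈ closedBall (‖x‖ • ξ) (‖‖x‖ • ξ‖ / 2) := by
    intro z hz
    rw [mem_closedBall, dist_smul₀, norm_norm, norm_smul, norm_norm, mul_div_assoc]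
    exact mul_le_mul_of_nonneg_left hz (norm_nonneg x)
  have hle := hu.le_exp_mul_of_mem_closedBall hG hp hq hpos hR (smul_ne_zero hx₀ hξ)
    (by rw [norm_smul, norm_norm, mul_assoc]; exact hx.le) (hmem a ha) (hmem b hb)
  rw [← smul_sub, norm_smul, norm_smul, norm_norm, div_mul_eq_mul_div,
    mul_left_comm, mul_div_mul_left _ _ hx₀, ← div_mul_eq_mul_div] at hle
  rw [rescale, rescale, mul_left_comm]
  exact mul_le_mul_of_nonneg_left hle (inv_nonneg.2 hμ.le)

theorem abs_sub_le_of_le_mul_of_le_mul {a b E : ℝ} (hb : 0 ≤ b) (hE : 1 ≤ E) (hab : a ≤ E * b)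
    (hba : b ≤ E * a) : |a - b| ≤ (E - 1) * b := by
  rw [abs_le]
  constructor
  · rcases le_total a b with h | h
    · linarith [mul_le_mul_of_nonneg_left h (sub_nonneg.2 hE)]
    · linarith [mul_nonneg (sub_nonneg.2 hE) hb]
  · linarith

theorem eventually_rescale_le (hp : 1 < p) {c : ℝ}
    (hup : ∀ᶠ x in 𝓝[≠] 0, f x ≤ c * mup N p x) (hy : y ≠ 0) :
    ∀ᶠ x in 𝓝[≠] 0, rescale p f x y ≤ c * (mup N p (‖x‖ • y) / mup N p x) := by
  filter_upwards [eventually_mup_pos hp, (tendsto_norm_smul_nhdsNE hy).eventually hup]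
    with x hμ hx
  rw [rescale, inv_mul_eq_div, ← mul_div_assoc]
  gcongr

theorem eventually_rescale_nonneg (hp : 1 < p) (hpos : ∀ᶠ x in 𝓝[≠] 0, 0 ≤ f x) (hy : y ≠ 0) :
    ∀ᶠ x in 𝓝[≠] 0, 0 ≤ rescale p f x y := by
  filter_upwards [eventually_mup_pos hp, (tendsto_norm_smul_nhdsNE hy).eventually hpos]
    with x hμ hx using mul_nonneg (inv_nonneg.2 hμ.le) hx

theorem exists_eventually_rescale_mem_Icc (hp : 1 < p) (hpN : p ≤ N) {c : ℝ}
    (hpos : ∀ᶠ x in 𝓝[≠] 0, 0 ≤ f x) (hup : ∀ᶠ x in 𝓝[≠] 0, f x ≤ c * mup N p x) (hy : y ≠ 0) :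
    ∃ M, ∀ᶠ x in 𝓝[≠] 0, rescale p f x y ∈ Icc 0 M := by
  refine ⟨c * ‖y‖ ^ ((p - N) / (p - 1)) + 1, ?_⟩
  filter_upwards [eventually_rescale_nonneg hp hpos hy, eventually_rescale_le hp hup hy,
    ((tendsto_mup_norm_smul_div_mup hp hpN hy).const_mul c).eventually_lt_const (lt_add_one _)]
    with x h₀ hle hlt using ⟨h₀, hle.trans hlt.le⟩

theorem IsStrongSolution.eventually_equicontinuous_rescale (hu : IsStrongSolution p q G u)
    (hG : IsOpen G) (hp : 1 < p) (hpN : p ≤ N) (hq : p - 1 < q) (hpos : ∀ x ∈ G, 0 ≤ u x)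
    (hR₀ : 0 < R) (hR : closedBall 0 R \ {0} ⊆ G) {c : ℝ}
    (hup : ∀ᶠ x in 𝓝[≠] 0, u x ≤ c * mup N p x) (hξ : ξ ≠ 0) {ε : ℝ} (hε : 0 < ε) :
    ∃ V ∈ 𝓝 ξ, ∀ᶠ x in 𝓝[≠] 0, ∀ y ∈ V, dist (rescale p u x y) (rescale p u x ξ) ≤ ε := by
  obtain ⟨M, hM⟩ := exists_eventually_rescale_mem_Icc hp hpN
    (eventually_of_mem (closedBall_diff_mem_nhdsNE hR₀ hR) hpos) hup hξ
  set C := 4 * gradientConst N p (q - p + 1) / ‖ξ‖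
  have hball : closedBall ξ (‖ξ‖ / 2) ∈ 𝓝 ξ := closedBall_mem_nhds ξ (by positivity)
  have hcont : Continuous fun y => (Real.exp (C * ‖y - ξ‖) - 1) * M := by fun_prop
  have hsmall : ∀ᶠ y in 𝓝 ξ, (Real.exp (C * ‖y - ξ‖) - 1) * M < ε :=
    (hcont.tendsto ξ).eventually_lt_const (by simpa using hε)
  refine ⟨_, inter_mem hball hsmall, ?_⟩
  filter_upwards [hM, hu.eventually_rescale_le_exp_mul hG hp hq hpos hR₀ hR hξ]
    with x hx hharnack y ⟨hy, hyε⟩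
  have hξball : ξ ∈ closedBall ξ (‖ξ‖ / 2) := mem_of_mem_nhds hball
  have hexp : 1 ≤ Real.exp (C * ‖y - ξ‖) :=
    Real.one_le_exp (by have := gradientConst_nonneg N p (q - p + 1); positivity)
  calc |rescale p u x y - rescale p u x ξ|
      ≤ (Real.exp (C * ‖y - ξ‖) - 1) * rescale p u x ξ :=
        abs_sub_le_of_le_mul_of_le_mul hx.1 hexp (hharnack ξ hξball y hy)
          (norm_sub_rev ξ y ▸ hharnack y hy ξ hξball)
    _ ≤ (Real.exp (C * ‖y - ξ‖) - 1) * M :=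
        mul_le_mul_of_nonneg_left hx.2 (sub_nonneg.2 hexp)
    _ ≤ ε := hyε.le

variable {l : Filter (EuclideanSpace ℝ (Fin N))} [l.NeBot]

theorem IsPSubharmonicOn.of_tendstoLocallyUniformlyOn_rescale (hf : IsPSubharmonicOn p f G)
    (hp : 1 < p) (hR₀ : 0 < R) (hR : closedBall 0 R \ {0} ⊆ G) (hl : l ≤ 𝓝[≠] 0)
    (hw : TendstoLocallyUniformlyOn (rescale p f) w l {0}ᶜ) : IsPSubharmonicOn p w {0}ᶜ :=
  .of_tendstoLocallyUniformlyOn isOpen_compl_singleton hw fun _ hK₀ hK =>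
    (hf.eventually_rescale hp hR₀ hR hK hK₀).filter_mono hl

theorem le_mul_norm_rpow_of_tendsto_rescale (hp : 1 < p) (hpN : p ≤ N)
    (hup : ∀ c > k, ∀ᶠ x in 𝓝[≠] 0, f x ≤ c * mup N p x) (hl : l ≤ 𝓝[≠] 0) (hy : y ≠ 0)
    {L : ℝ} (hL : Tendsto (fun x => rescale p f x y) l (𝓝 L)) :
    L ≤ k * ‖y‖ ^ ((p - N) / (p - 1)) := by
  have hle : ∀ c > k, L ≤ c * ‖y‖ ^ ((p - N) / (p - 1)) := fun c hc =>
    le_of_tendsto_of_tendsto hL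
      (((tendsto_mup_norm_smul_div_mup hp hpN hy).const_mul c).mono_left hl)
      ((eventually_rescale_le hp (hup c hc) hy).filter_mono hl)
  have hcont : Continuous fun c : ℝ => c * ‖y‖ ^ ((p - N) / (p - 1)) := by fun_prop
  exact ge_of_tendsto ((hcont.tendsto k).mono_left nhdsWithin_le_nhds)
    (eventually_of_mem (self_mem_nhdsWithin (s := Ioi k)) hle)

variable {𝒰 : Ultrafilter (EuclideanSpace ℝ (Fin N))}

theorem IsStrongSolution.exists_tendstoLocallyUniformlyOn_rescale (hu : IsStrongSolution p q G u)
    (hG : IsOpen G) (hp : 1 < p) (hpN : p ≤ N) (hq : p - 1 < q) (hpos : ∀ x ∈ G, 0 ≤ u x)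
    (hR₀ : 0 < R) (hR : closedBall 0 R \ {0} ⊆ G) {c : ℝ}
    (hup : ∀ᶠ x in 𝓝[≠] 0, u x ≤ c * mup N p x)
    (h𝒰 : (𝒰 : Filter (EuclideanSpace ℝ (Fin N))) ≤ 𝓝[≠] 0) :
    ∃ w, TendstoLocallyUniformlyOn (rescale p u) w 𝒰 {0}ᶜ := by
  have hpos₀ := eventually_of_mem (closedBall_diff_mem_nhdsNE hR₀ hR) hpos
  have hlim : ∀ y : EuclideanSpace ℝ (Fin N), y ≠ 0 → ∃ l : ℝ,
      Tendsto (fun x => rescale p u x y) 𝒰 (𝓝 l) := by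
    intro y hy
    obtain ⟨M, hM⟩ := exists_eventually_rescale_mem_Icc hp hpN hpos₀ hup hy
    obtain ⟨l, -, hl⟩ := isCompact_Icc.ultrafilter_le_nhds
      (𝒰.map fun x => rescale p u x y) (le_principal_iff.2 (hM.filter_mono h𝒰))
    exact ⟨l, hl⟩
  choose! w hw using hlim
  refine ⟨w, tendstoLocallyUniformlyOn_of_eventually_equicontinuous hw fun y hy ε hε => ?_⟩
  obtain ⟨V, hV, hequi⟩ :=
    hu.eventually_equicontinuous_rescale hG hp hpN hq hpos hR₀ hR hup hy hε
  exact ⟨V, hV, hequi.filter_mono h𝒰⟩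

theorem exists_tendsto_div_mup_of_norm_eq (h𝒰 : (𝒰 : Filter (EuclideanSpace ℝ (Fin N))) ≤ 𝓝[≠] 0)
    (hw : TendstoLocallyUniformlyOn (rescale p f) w 𝒰 {0}ᶜ) (hcont : ContinuousOn w {0}ᶜ)
    {ζ : EuclideanSpace ℝ (Fin N) → EuclideanSpace ℝ (Fin N)} (hζ : ∀ᶠ x in 𝒰, ‖ζ x‖ = ‖x‖) :
    ∃ a ∈ sphere 0 1, Tendsto (fun x => f (ζ x) / mup N p x) 𝒰 (𝓝 (w a)) := by
  have hx₀ : ∀ᶠ x in (𝒰 : Filter (EuclideanSpace ℝ (Fin N))), ‖x‖ ≠ 0 :=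
    (eventually_of_mem self_mem_nhdsWithin fun x hx => norm_ne_zero_iff.2 hx).filter_mono h𝒰
  have hsphere : ∀ᶠ x in 𝒰, ‖x‖⁻¹ • ζ x ∈ sphere (0 : EuclideanSpace ℝ (Fin N)) 1 := by
    filter_upwards [hζ, hx₀] with x hx hx₀
    rw [mem_sphere_zero_iff_norm, norm_smul, norm_inv, norm_norm, hx, inv_mul_cancel₀ hx₀]
  obtain ⟨a, ha, hlim⟩ := (isCompact_sphere (0 : EuclideanSpace ℝ (Fin N)) 1).ultrafilter_le_nhds
    (𝒰.map fun x => ‖x‖⁻¹ • ζ x) (le_principal_iff.2 hsphere)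
  have ha₀ : a ≠ 0 := ne_of_mem_sphere ha one_ne_zero
  have hlim₀ : Tendsto (fun x => ‖x‖⁻¹ • ζ x) 𝒰 (𝓝[{0}ᶜ] a) :=
    tendsto_nhdsWithin_of_tendsto_nhds_of_eventually_within _ hlim
      (hsphere.mono fun x hx => ne_of_mem_sphere hx one_ne_zero)
  refine ⟨a, ha, (hw.tendsto_comp (hcont a ha₀) ha₀ hlim₀).congr' ?_⟩
  filter_upwards [hx₀] with x hx
  rw [rescale, smul_inv_smul₀ hx, inv_mul_eq_div]

theorem exists_mem_sphere_sInf_sphereMajorants_le (hp : 1 < p) (hN : N ≠ 0)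
    (h𝒰 : (𝒰 : Filter (EuclideanSpace ℝ (Fin N))) ≤ 𝓝[≠] 0)
    (hw : TendstoLocallyUniformlyOn (rescale p f) w 𝒰 {0}ᶜ) (hcont : ContinuousOn w {0}ᶜ)
    (hpos : ∀ y ≠ 0, 0 ≤ w y) : ∃ a ∈ sphere 0 1, sInf (sphereMajorants p f) ≤ w a := by
  have hsphere : sphere (0 : EuclideanSpace ℝ (Fin N)) 1 ⊆ {0}ᶜ := fun _ hx =>
    ne_of_mem_sphere hx one_ne_zero
  obtain ⟨a, ha, hmax⟩ := (isCompact_sphere 0 1).exists_isMaxOn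
    ⟨EuclideanSpace.single ⟨0, Nat.pos_of_ne_zero hN⟩ 1, by simp⟩ (hcont.mono hsphere)
  refine ⟨a, ha, le_of_forall_lt_imp_le_of_dense fun c hc => ?_⟩
  rcases lt_or_ge c 0 with hc₀ | hc₀
  · exact hc₀.le.trans (hpos a (hsphere ha))
  obtain ⟨ζ, hζ⟩ := ((eventually_exists_mul_mup_lt hc₀ hc).filter_mono h𝒰).choice
  obtain ⟨b, hb, hlim⟩ := exists_tendsto_div_mup_of_norm_eq h𝒰 hw hcont (hζ.mono fun x hx => hx.1)
  have hcb : c ≤ w b := by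
    refine ge_of_tendsto hlim ?_
    filter_upwards [hζ, (eventually_mup_pos hp).filter_mono h𝒰] with x ⟨hx, hlt⟩ hμ
    rw [le_div_iff₀ hμ, ← mup_congr hx]
    exact hlt.le
  exact hcb.trans (hmax hb)

theorem isGaussianStableAt_mul_norm_rpow (hp : 1 < p) (hpN : p ≤ N) (k : ℝ) (hy : y ≠ 0) :
    IsGaussianStableAt p (fun z : EuclideanSpace ℝ (Fin N) => k * ‖z‖ ^ ((p - N) / (p - 1))) y := by
  rcases eq_or_ne k 0 with rfl | hk
  · simpa using isGaussianStableAt_const hp 0 y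
  rcases hpN.eq_or_lt with h | h
  · simpa [h] using isGaussianStableAt_const hp k y
  have hNp : (N : ℝ) - p ≠ 0 := by linarith
  have hp₁ : p - 1 ≠ 0 := by linarith
  convert isGaussianStableAt_const_mul_mup hp hpN (div_ne_zero (mul_ne_zero hk hNp) hp₁) hy
    using 2 with z
  rw [mup, if_pos h]
  field_simp

theorem IsPSubharmonicOn.eqOn_mul_norm_rpow (hw : IsPSubharmonicOn p w {0}ᶜ) (hN : 2 ≤ N)
    (hp : 1 < p) (hpN : p ≤ N) (hle : ∀ y ≠ 0, w y ≤ k * ‖y‖ ^ ((p - N) / (p - 1)))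
    {a : EuclideanSpace ℝ (Fin N)} (ha : a ∈ sphere 0 1) (hka : k ≤ w a) :
    EqOn w (fun y => k * ‖y‖ ^ ((p - N) / (p - 1))) {0}ᶜ := by
  have hrank : 1 < Module.rank ℝ (EuclideanSpace ℝ (Fin N)) := by
    rw [← Module.finrank_eq_rank, finrank_euclideanSpace_fin]
    exact_mod_cast hN
  have ha₀ : a ≠ 0 := ne_of_mem_sphere ha one_ne_zero
  refine hw.eqOn_of_eq isOpen_compl_singleton
    (isConnected_compl_singleton_of_one_lt_rank hrank 0).isPreconnected
    (continuousOn_const.mul (continuous_norm.continuousOn.rpow_const fun y hy => ?_)) hle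
    (fun y hy => isGaussianStableAt_mul_norm_rpow hp hpN k hy) ha₀ ?_
  · exact .inl (norm_ne_zero_iff.2 hy)
  · refine (hle a ha₀).antisymm (le_of_eq_of_le ?_ hka)
    rw [mem_sphere_zero_iff_norm.1 ha, Real.one_rpow, mul_one]

theorem IsStrongSolution.tendsto_div_mup (hu : IsStrongSolution p q G u) (hG : IsOpen G)
    (hN : 2 ≤ N) (hp : 1 < p) (hpN : p ≤ N) (hq : p - 1 < q) (hpos : ∀ x ∈ G, 0 ≤ u x)
    (hR₀ : 0 < R) (hR : closedBall 0 R \ {0} ⊆ G) (hne : (sphereMajorants p u).Nonempty) :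
    Tendsto (fun x => u x / mup N p x) (𝓝[≠] 0) (𝓝 (sInf (sphereMajorants p u))) := by
  have hsub : IsPSubharmonicOn p u G := hu.isPSubharmonicOn hG hp.le
  have hup : ∀ c > sInf (sphereMajorants p u), ∀ᶠ x in 𝓝[≠] 0, u x ≤ c * mup N p x := fun c =>
    hsub.eventually_le_mul_mup hp hpN hR₀ hR hne
  have hpos₀ := eventually_of_mem (closedBall_diff_mem_nhdsNE hR₀ hR) hpos
  refine tendsto_iff_ultrafilter _ _ _ |>.2 fun 𝒰 h𝒰 => ?_
  obtain ⟨w, hw⟩ := hu.exists_tendstoLocallyUniformlyOn_rescale hG hp hpN hq hpos hR₀ hR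
    (hup _ (lt_add_one _)) h𝒰
  have hwsub : IsPSubharmonicOn p w {0}ᶜ :=
    hsub.of_tendstoLocallyUniformlyOn_rescale hp hR₀ hR h𝒰 hw
  have hwpos : ∀ y ≠ 0, 0 ≤ w y := fun y hy =>
    ge_of_tendsto (hw.tendsto_at hy) ((eventually_rescale_nonneg hp hpos₀ hy).filter_mono h𝒰)
  have hwle : ∀ y ≠ 0, w y ≤ sInf (sphereMajorants p u) * ‖y‖ ^ ((p - N) / (p - 1)) := fun y hy =>
    le_mul_norm_rpow_of_tendsto_rescale hp hpN hup h𝒰 hy (hw.tendsto_at hy)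
  obtain ⟨a, ha, hka⟩ :=
    exists_mem_sphere_sInf_sphereMajorants_le hp (by lia) h𝒰 hw hwsub.1 hwpos
  obtain ⟨b, hb, hlim⟩ := exists_tendsto_div_mup_of_norm_eq (ζ := id) h𝒰 hw hwsub.1 (by simp)
  have hwb : w b = sInf (sphereMajorants p u) * ‖b‖ ^ ((p - N) / (p - 1)) :=
    hwsub.eqOn_mul_norm_rpow hN hp hpN hwle ha hka (ne_of_mem_sphere hb one_ne_zero)
  rw [mem_sphere_zero_iff_norm.1 hb, Real.one_rpow, mul_one] at hwb
  exact hwb ▸ hlim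

end BlowUp

theorem singularity_weak_general {N : ℕ} {p q : ℝ} (hp : 1 < p) (hpN : p ≤ N) (hq : p - 1 < q)
    {G : Set (EuclideanSpace ℝ (Fin N))} (hG : IsOpen G) (hG₀ : G ∈ 𝓝[≠] 0)
    {u : EuclideanSpace ℝ (Fin N) → ℝ} (hu : IsStrongSolution p q G u)
    (hpos : ∀ x ∈ G, 0 ≤ u x) (hliminf : ∃ m, ∃ᶠ x in 𝓝[≠] 0, u x / mup N p x ≤ m) :
    ∃ k, 0 ≤ k ∧ Tendsto (fun x => u x / mup N p x) (𝓝[≠] 0) (𝓝 k) := by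
  have hN : 2 ≤ N := by exact_mod_cast hp.trans_le hpN
  obtain ⟨R, hR₀, hR⟩ := (nhdsWithin_hasBasis nhds_basis_closedBall _).mem_iff.1 hG₀
  obtain ⟨m, hm⟩ := hliminf
  have hne := hu.sphereMajorants_nonempty hG hN hp hq hpos hR₀ hR hm
  exact ⟨_, le_csInf hne fun _ hc => hc.1, hu.tendsto_div_mup hG hN hp hpN hq hpos hR₀ hR hne⟩

/-- If `u/μ_p` has finite liminf at the singularity, it has a limit `k ≥ 0`. -/
theorem singularity_weak (N : ℕ) (hN : 2 ≤ N) (p q : ℝ) (hp1 : 1 < p) (hpN : p ≤ N)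
    (hq1 : p - 1 < q) (hq2 : q < (N : ℝ) * (p - 1) / ((N : ℝ) - 1))
    (Ω : Set (EuclideanSpace ℝ (Fin N))) (hΩ : IsOpen Ω)
    (hball : Metric.closedBall (0 : EuclideanSpace ℝ (Fin N)) 1 ⊆ Ω)
    (u : EuclideanSpace ℝ (Fin N) → ℝ) (hu : IsStrongSolution p q (Ω \ {0}) u)
    (hpos : ∀ x ∈ Ω \ {0}, 0 ≤ u x)
    (hliminf : ∃ m : ℝ, ∃ᶠ x in 𝓝[≠] (0 : EuclideanSpace ℝ (Fin N)), u x / mup N p x ≤ m) :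
    ∃ k : ℝ, 0 ≤ k ∧
      Filter.Tendsto (fun x => u x / mup N p x) (𝓝[≠] (0 : EuclideanSpace ℝ (Fin N)))
        (nhds k) :=
  singularity_weak_general hp1 hpN hq1 (hΩ.sdiff isClosed_singleton)
    (closedBall_diff_mem_nhdsNE one_pos (sdiff_subset_sdiff_left hball)) hu hpos hliminf
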